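/- arXiv:0910.0433 — 2 statements merged into one kernel-verified Lean document; each statement's English description precedes it below -/
import Mathlib

section
/- Let w be a smooth solution of □w = F on ℝ₊ × ℝ⁴ with vanishing initial data w(0,·) = ∂_t w(0,·) = 0, and suppose F(t,x) = 0 for |x| > 2. Then for every δ > 0 there is a constant C (independent of T, w, and F) such that for all T > 0, ‖⟨x⟩^{−1/2−δ} w‖_{L²_{t,x}([0,T]×ℝ⁴)} ≤ C ‖F‖_{L²_{t,x}([0,T]×ℝ⁴)}. -/
/-!
Pairing `□z` with Morawetz's multiplier `a x·∇z + q z`, where `a` and `q` are radial, leaves a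
positive definite bulk term controlling `⟨x⟩^(-(3+ε)) z²`; subtracting `2n ∂ₜz` makes the flux
through a time slice nonpositive, because the energy dominates the slice term of the multiplier.
For test functions `z` vanishing near `t = T` this bounds `⟨x⟩^(-(3+ε)/2) z` by
`⟨x⟩^((1+ε)/2) □z` in `L²` of the slab. The weight on `z` is weaker than the one wanted for `w`
by a factor `⟨x⟩`, while the weight on `□z` is not needed when the forcing has compact support,
and duality exchanges the two: by Green's identity `∫ w □z = ∫ □w z`, so the functional
`z ↦ ∫ w □z` is represented by some `y` in `L²`, of norm at most a multiple of that of
`⟨x⟩^((3+ε)/2) □w`, paired with `⟨x⟩^((1+ε)/2) □z`. Then `u = w - ⟨x⟩^((1+ε)/2) y` is a weak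
solution of `□u = 0` that vanishes in the past; its mollifications vanish by the energy estimate
in backward light cones, so `w = ⟨x⟩^((1+ε)/2) y`, which is the claim.
-/

open MeasureTheory Real Set
open scoped ENNReal FourierTransform

noncomputable section

/-- Euclidean space ℝⁿ. -/
abbrev Eu (n : ℕ) : Type := EuclideanSpace ℝ (Fin n)

/-- Spatial partial derivative ∂_i of a function on ℝⁿ. -/
def sd {n : ℕ} (i : Fin n) (h : Eu n → ℝ) : Eu n → ℝ :=
  fun x => fderiv ℝ h x (EuclideanSpace.single i 1)

/-- Iterated spatial derivatives ∂_x^μ. -/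
def sdIter {n : ℕ} : {m : ℕ} → (Fin m → Fin n) → (Eu n → ℝ) → Eu n → ℝ
  | 0, _, h => h
  | m + 1, μ, h => sd (μ 0) (sdIter (fun i : Fin m => μ i.succ) h)

/-- Time derivative ∂_t of u(t,x). -/
def td {n : ℕ} (u : ℝ → Eu n → ℝ) : ℝ → Eu n → ℝ :=
  fun t x => deriv (fun s => u s x) t

/-- Space-time partial derivative ∂_α, with ∂₀ = ∂_t. -/
def pd {n : ℕ} (α : Fin (n + 1)) (u : ℝ → Eu n → ℝ) : ℝ → Eu n → ℝ :=
  if h : α = 0 then td u else fun t x => sd (α.pred h) (u t) x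

/-- Iterated space-time derivatives ∂^μ. -/
def pdIter {n : ℕ} : {m : ℕ} → (Fin m → Fin (n + 1)) → (ℝ → Eu n → ℝ) → ℝ → Eu n → ℝ
  | 0, _, u => u
  | m + 1, μ, u => pd (μ 0) (pdIter (fun i : Fin m => μ i.succ) u)

/-- Iterated spatial derivatives of a space-time function. -/
def sdIterT {n m : ℕ} (μ : Fin m → Fin n) (u : ℝ → Eu n → ℝ) : ℝ → Eu n → ℝ :=
  fun t x => sdIter μ (u t) x

/-- The d'Alembertian □ = ∂_t² − Δ. -/
def dAlembert {n : ℕ} (u : ℝ → Eu n → ℝ) : ℝ → Eu n → ℝ :=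
  fun t x => td (td u) t x - ∑ i : Fin n, sd i (sd i (u t)) x

/-- |u'| : the magnitude of the space-time gradient (∂_t u, ∇_x u). -/
def gradMag {n : ℕ} (u : ℝ → Eu n → ℝ) : ℝ → Eu n → ℝ :=
  fun t x => Real.sqrt (∑ α : Fin (n + 1), pd α u t x ^ 2)

/-- Smoothness of a space-time function. -/
def SmoothTX {n : ℕ} (u : ℝ → Eu n → ℝ) : Prop :=
  ContDiff ℝ (⊤ : ℕ∞) fun p : ℝ × Eu n => u p.1 p.2

/-- L² norm over a region S ⊆ ℝⁿ. -/
def L2x {n : ℕ} (S : Set (Eu n)) (f : Eu n → ℝ) : ℝ≥0∞ :=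
  eLpNorm f 2 (volume.restrict S)

/-- Space-time L² norm over [0,T] × S. -/
def L2st {n : ℕ} (T : ℝ) (S : Set (Eu n)) (u : ℝ → Eu n → ℝ) : ℝ≥0∞ :=
  eLpNorm (fun p : ℝ × Eu n => u p.1 p.2) 2
    ((volume.restrict (Icc 0 T)).prod (volume.restrict S))

/-- Japanese bracket ⟨x⟩ = (1+|x|²)^{1/2}. -/
def jap {n : ℕ} (x : Eu n) : ℝ := Real.sqrt (1 + ‖x‖ ^ 2)

/-- Homogeneous Sobolev norm ‖f‖_{Ḣ^s} = ‖ |ξ|^s 𝓕f(ξ) ‖_{L²}. -/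
def sobolevHom {n : ℕ} (s : ℝ) (f : Eu n → ℝ) : ℝ≥0∞ :=
  eLpNorm (fun ξ : Eu n => ‖ξ‖ ^ s * ‖𝓕 (fun x : Eu n => (f x : ℂ)) ξ‖) 2 volume

/-- A smooth compact obstacle K = {ρ ≤ 0} given by a smooth defining function. -/
structure SmoothObstacle (n : ℕ) where
  ρ : Eu n → ℝ
  smooth : ContDiff ℝ (⊤ : ℕ∞) ρ
  K : Set (Eu n)
  K_def : K = {x | ρ x ≤ 0}
  compact : IsCompact K
  grad_ne : ∀ x, ρ x = 0 → fderiv ℝ ρ x ≠ 0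

/-- Ordered pairs (j,k), j < k, indexing the rotation fields Ω_{jk} on ℝ⁴. -/
abbrev OP : Type := {p : Fin 4 × Fin 4 // p.1 < p.2}

/-- Rotation vector field Ω_{jk} = x_j ∂_k − x_k ∂_j. -/
def rot (j k : Fin 4) (h : Eu 4 → ℝ) : Eu 4 → ℝ :=
  fun x => x j * sd k h x - x k * sd j h x

/-- Products Ω^μ of rotation vector fields. -/
def rotIter : {m : ℕ} → (Fin m → OP) → (Eu 4 → ℝ) → Eu 4 → ℝ
  | 0, _, h => h
  | m + 1, μ, h => rot (μ 0).1.1 (μ 0).1.2 (rotIter (fun i : Fin m => μ i.succ) h)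

/-- Radial derivative ∇_r = (x/|x|)·∇. -/
def radialD (h : Eu 4 → ℝ) : Eu 4 → ℝ :=
  fun x => fderiv ℝ h x (‖x‖⁻¹ • x)

/-- Iterated radial derivatives ∇_r^j. -/
def radialIter : ℕ → (Eu 4 → ℝ) → Eu 4 → ℝ
  | 0, h => h
  | j + 1, h => radialD (radialIter j h)

/-- Magnitude of the spatial gradient ∇_x h. -/
def spGradMag (h : Eu 4 → ℝ) : Eu 4 → ℝ :=
  fun x => Real.sqrt (∑ i : Fin 4, sd i h x ^ 2)

/-- Index set for the fields Z = {∂_α, Ω_{jk}}. -/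
abbrev ZIdx : Type := Fin 5 ⊕ OP

/-- Action of a single field Z. -/
def applyZ : ZIdx → (ℝ → Eu 4 → ℝ) → ℝ → Eu 4 → ℝ
  | Sum.inl α, u => pd (n := 4) α u
  | Sum.inr p, u => fun t x => rot p.1.1 p.1.2 (u t) x

/-- Products Z^μ of the fields Z. -/
def ZIter : {m : ℕ} → (Fin m → ZIdx) → (ℝ → Eu 4 → ℝ) → ℝ → Eu 4 → ℝ
  | 0, _, u => u
  | m + 1, μ, u => applyZ (μ 0) (ZIter (fun i : Fin m => μ i.succ) u)

/-- The perturbed d'Alembertian □_h φ = □φ + h^{αβ} ∂_α ∂_β φ. -/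
def boxH (h : Fin 5 → Fin 5 → ℝ → Eu 4 → ℝ) (φ : ℝ → Eu 4 → ℝ) : ℝ → Eu 4 → ℝ :=
  fun t x => dAlembert φ t x
    + ∑ α : Fin 5, ∑ β : Fin 5, h α β t x * pd (n := 4) α (pd (n := 4) β φ) t x

/-- |h| = Σ_{α,β} |h^{αβ}|. -/
def habs (h : Fin 5 → Fin 5 → ℝ → Eu 4 → ℝ) : ℝ → Eu 4 → ℝ :=
  fun t x => ∑ α : Fin 5, ∑ β : Fin 5, |h α β t x|

/-- |∂h| = Σ_{α,β,γ} |∂_γ h^{αβ}|. -/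
def dhabs (h : Fin 5 → Fin 5 → ℝ → Eu 4 → ℝ) : ℝ → Eu 4 → ℝ :=
  fun t x => ∑ γ : Fin 5, ∑ α : Fin 5, ∑ β : Fin 5, |pd (n := 4) γ (h α β) t x|

/-- Mixed norm ‖G‖_{L¹_t L¹_r L²_ω(ℝ₊×ℝ⁴)}. -/
def mixedNorm (G : ℝ → Eu 4 → ℝ) : ℝ≥0∞ :=
  ∫⁻ t in Ioi (0 : ℝ), ∫⁻ r in Ioi (0 : ℝ),
    eLpNorm (fun ω : Metric.sphere (0 : Eu 4) 1 => G t (r • (ω : Eu 4))) 2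
        (volume : Measure (Eu 4)).toSphere
      * ENNReal.ofReal (r ^ 3)

/-- The quantity M(T) (for `kmax = 50`) and A(T) (for `kmax = 49`) from the iteration. -/
def Mgen (kmax : ℕ) (Kc : Set (Eu 4)) (δ : ℝ) (u : ℝ → Eu 4 → ℝ) (T : ℝ) : ℝ≥0∞ :=
  (∑ m ∈ Finset.range (kmax + 1), ∑ μ : Fin m → Fin 5,
      ((⨆ t ∈ Icc (0 : ℝ) T, L2x Kc fun x => gradMag (pdIter (n := 4) μ u) t x)
        + L2st T Kc fun t x => jap x ^ (-(1/2 : ℝ) - δ) * gradMag (pdIter (n := 4) μ u) t x))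
  + (∑ m ∈ Finset.range kmax, ∑ μ : Fin m → ZIdx,
      ((L2st T Kc fun t x => jap x ^ (-(1/2 : ℝ) - δ) * gradMag (ZIter μ u) t x)
        + (L2st T (Kc ∩ {x : Eu 4 | 2 < ‖x‖}) fun t x =>
            jap x ^ (-(1/2 : ℝ) - 2*δ) * ZIter μ u t x)
        + ⨆ t ∈ Icc (0 : ℝ) T, L2x Kc fun x => gradMag (ZIter μ u) t x))
  + L2st T (Kc ∩ {x : Eu 4 | ‖x‖ < 3}) u

/-- The data (f,g) satisfy the compatibility conditions to infinite order for the
Dirichlet problem □u = Q(u) on the exterior of {ρ ≤ 0}: there is a smooth function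
attaining the data, vanishing on the boundary, and solving the equation
to infinite order at t = 0 (its Taylor coefficients at t = 0 are the formal ψ_k). -/
def CompatInfty {n : ℕ} (ρ : Eu n → ℝ) (f g : Eu n → ℝ)
    (Q : (ℝ → Eu n → ℝ) → ℝ → Eu n → ℝ) : Prop :=
  ∃ U : ℝ → Eu n → ℝ, SmoothTX U ∧ (∀ x, U 0 x = f x) ∧ (∀ x, td U 0 x = g x) ∧
    (∀ t x, ρ x = 0 → U t x = 0) ∧
    ∀ k : ℕ, ∀ x, 0 ≤ ρ x → td^[k] (fun s y => dAlembert U s y - Q U s y) 0 x = 0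

/-- The general quasilinear nonlinearity Q(u,u',u'') = A(u,u') + B^{αβ}(u,u') ∂_α∂_β u. -/
def Qnl {n : ℕ} (A : ℝ × (Fin (n + 1) → ℝ) → ℝ)
    (B : Fin (n + 1) → Fin (n + 1) → ℝ × (Fin (n + 1) → ℝ) → ℝ)
    (u : ℝ → Eu n → ℝ) : ℝ → Eu n → ℝ :=
  fun t x => A (u t x, fun α => pd α u t x)
    + ∑ α, ∑ β, B α β (u t x, fun γ => pd γ u t x) * pd α (pd β u) t x

/-- The quadratically truncated nonlinearity, evaluated on the pair (v,w);
the iteration RHS is `iterRHS a b A B u_{l-1} u_l`. -/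
def iterRHS (a : Fin 5 → ℝ) (b A : Fin 5 → Fin 5 → ℝ) (B : Fin 5 → Fin 5 → Fin 5 → ℝ)
    (v w : ℝ → Eu 4 → ℝ) : ℝ → Eu 4 → ℝ :=
  fun t x => (∑ α : Fin 5, a α * v t x * pd (n := 4) α v t x)
    + (∑ α : Fin 5, ∑ β : Fin 5, b α β * pd (n := 4) α v t x * pd (n := 4) β v t x)
    + (∑ α : Fin 5, ∑ β : Fin 5, A α β * v t x * pd (n := 4) α (pd (n := 4) β w) t x)
    + (∑ α : Fin 5, ∑ β : Fin 5, ∑ γ : Fin 5,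
        B α β γ * pd (n := 4) α v t x * pd (n := 4) β (pd (n := 4) γ w) t x)

/-! ### Currents of the wave operator -/

section Currents

variable {R A ι : Type*} [CommRing R] [CommRing A] [Algebra R A] [Fintype ι]
  (D₀ : Derivation R A A) (D : ι → Derivation R A A)

/-- The wave operator `∂ₜ² - Δ` built from a time derivation `D₀` and space derivations `D i`. -/
def waveOp : A →ₗ[R] A :=
  D₀.toLinearMap ∘ₗ D₀.toLinearMap - ∑ i, (D i).toLinearMap ∘ₗ (D i).toLinearMap

/-- The space-time divergence of a current, a pair of a time component and space components. -/
def divergence : A × (ι → A) →ₗ[R] A :=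
  D₀.toLinearMap ∘ₗ LinearMap.fst R A (ι → A) +
    ∑ i, (D i).toLinearMap ∘ₗ LinearMap.proj i ∘ₗ LinearMap.snd R A (ι → A)

theorem waveOp_apply (z : A) : waveOp D₀ D z = D₀ (D₀ z) - ∑ i, D i (D i z) := by
  simp [waveOp]

theorem divergence_apply (J : A × (ι → A)) : divergence D₀ D J = D₀ J.1 + ∑ i, D i (J.2 i) := by
  simp [divergence]

/-- The Wronskian current of Green's identity. -/
def greenCurrent (w z : A) : A × (ι → A) :=
  (w * D₀ z - z * D₀ w, fun i ↦ z * D i w - w * D i z)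

/-- The energy-momentum current of the multiplier `2 ρ ∂ₜz`. -/
def energyCurrent (ρ z : A) : A × (ι → A) :=
  (ρ * (D₀ z ^ 2 + ∑ j, D j z ^ 2), fun i ↦ -2 * (ρ * D₀ z * D i z))

/-- The current of the zero-order multiplier `2 q z`. -/
def zeroOrderCurrent (q z : A) : A × (ι → A) :=
  (2 * q * z * D₀ z, fun i ↦ D i q * z ^ 2 - 2 * q * z * D i z)

/-- The energy-momentum current of the multiplier `2 X·∇z`. -/
def momentumCurrent (X : ι → A) (z : A) : A × (ι → A) :=
  (2 * D₀ z * ∑ j, X j * D j z,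
    fun i ↦ X i * (∑ j, D j z ^ 2 - D₀ z ^ 2) - 2 * D i z * ∑ j, X j * D j z)

theorem divergence_greenCurrent (w z : A) :
    divergence D₀ D (greenCurrent D₀ D w z) = w * waveOp D₀ D z - z * waveOp D₀ D w := by
  simp only [divergence_apply, greenCurrent, waveOp_apply, map_sub, Derivation.leibniz,
    smul_eq_mul, mul_sub, Finset.mul_sum, Finset.sum_add_distrib, Finset.sum_sub_distrib,
    mul_comm (D _ w) (D _ z)]
  ring

variable {D₀ D}

theorem divergence_energyCurrent (hD : ∀ i f, D₀ (D i f) = D i (D₀ f)) (ρ z : A) :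
    divergence D₀ D (energyCurrent D₀ D ρ z) =
      D₀ ρ * (D₀ z ^ 2 + ∑ i, D i z ^ 2) - 2 * D₀ z * ∑ i, D i ρ * D i z
        + 2 * ρ * D₀ z * waveOp D₀ D z := by
  have two (d : Derivation R A A) : d 2 = 0 := mod_cast d.map_natCast 2
  have time : D₀ (∑ i, D i z ^ 2) = 2 * ∑ i, D i z * D i (D₀ z) := by
    simp only [map_sum, Derivation.leibniz_pow, hD, Finset.mul_sum, smul_eq_mul, nsmul_eq_mul]
    exact Finset.sum_congr rfl fun i _ ↦ by push_cast; ring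
  have space (i : ι) : D i (-2 * (ρ * D₀ z * D i z)) = -2 * D₀ z * (D i ρ * D i z)
      - 2 * ρ * (D i z * D i (D₀ z)) - 2 * ρ * D₀ z * D i (D i z) := by
    simp only [Derivation.leibniz, map_neg, two, smul_eq_mul]
    ring
  simp only [divergence_apply, energyCurrent, waveOp_apply, space, Derivation.leibniz, map_add,
    Derivation.leibniz_pow, time, Finset.sum_sub_distrib, ← Finset.mul_sum, smul_eq_mul,
    nsmul_eq_mul]
  push_cast
  ring

theorem divergence_zeroOrderCurrent {q : A} (hq : D₀ q = 0) (z : A) :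
    divergence D₀ D (zeroOrderCurrent D₀ D q z) =
      2 * q * z * waveOp D₀ D z + 2 * q * (D₀ z ^ 2 - ∑ i, D i z ^ 2)
        + (∑ i, D i (D i q)) * z ^ 2 := by
  have two (d : Derivation R A A) : d 2 = 0 := mod_cast d.map_natCast 2
  have space (i : ι) : D i (D i q * z ^ 2 - 2 * q * z * D i z) =
      z ^ 2 * D i (D i q) - 2 * q * D i z ^ 2 - 2 * q * z * D i (D i z) := by
    simp only [map_sub, Derivation.leibniz, Derivation.leibniz_pow, two, smul_eq_mul, nsmul_eq_mul]
    push_cast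
    ring
  simp only [divergence_apply, zeroOrderCurrent, waveOp_apply, space, Derivation.leibniz, two, hq,
    Finset.sum_sub_distrib, ← Finset.mul_sum, smul_eq_mul]
  ring

theorem divergence_momentumCurrent (hD₀ : ∀ i f, D₀ (D i f) = D i (D₀ f))
    (hD : ∀ i j f, D i (D j f) = D j (D i f)) {X : ι → A} (hX : ∀ i, D₀ (X i) = 0) (z : A) :
    divergence D₀ D (momentumCurrent D₀ D X z) =
      2 * (∑ i, X i * D i z) * waveOp D₀ D z
        - (∑ i, D i (X i)) * (D₀ z ^ 2 - ∑ i, D i z ^ 2)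
        - 2 * ∑ i, ∑ j, D i (X j) * D i z * D j z := by
  have two (d : Derivation R A A) : d 2 = 0 := mod_cast d.map_natCast 2
  have time : D₀ (∑ j, X j * D j z) = ∑ j, X j * D j (D₀ z) := by
    simp [Derivation.leibniz, hX, hD₀]
  have grad (i : ι) : D i z * D i (∑ j, X j * D j z) =
      ∑ j, D i (X j) * D i z * D j z + ∑ j, X j * (D i z * D j (D i z)) := by
    rw [map_sum, Finset.mul_sum, ← Finset.sum_add_distrib]
    exact Finset.sum_congr rfl fun j _ ↦ by
      rw [Derivation.leibniz, hD i j, smul_eq_mul, smul_eq_mul]; ring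
  have normSq (i : ι) : D i (∑ j, D j z ^ 2) = 2 * ∑ j, D j z * D i (D j z) := by
    simp only [map_sum, Derivation.leibniz_pow, Finset.mul_sum, smul_eq_mul, nsmul_eq_mul]
    exact Finset.sum_congr rfl fun j _ ↦ by push_cast; ring
  have swap : ∑ i, ∑ j, X j * (D i z * D j (D i z)) = ∑ i, X i * ∑ j, D j z * D i (D j z) := by
    simp only [Finset.mul_sum]
    exact Finset.sum_comm
  have space (i : ι) :
      D i (X i * (∑ j, D j z ^ 2 - D₀ z ^ 2) - 2 * D i z * ∑ j, X j * D j z) =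
        (∑ j, D j z ^ 2 - D₀ z ^ 2) * D i (X i) + 2 * (X i * ∑ j, D j z * D i (D j z))
          - 2 * D₀ z * (X i * D i (D₀ z)) - 2 * (∑ j, X j * D j z) * D i (D i z)
          - 2 * (∑ j, D i (X j) * D i z * D j z + ∑ j, X j * (D i z * D j (D i z))) := by
    rw [← grad]
    simp only [map_sub, Derivation.leibniz, normSq, Derivation.leibniz_pow, two, smul_eq_mul,
      nsmul_eq_mul]
    push_cast
    ring
  simp only [divergence_apply, momentumCurrent, waveOp_apply, space, Derivation.leibniz, time, two,
    Finset.sum_sub_distrib, Finset.sum_add_distrib, ← Finset.mul_sum, swap, smul_eq_mul]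
  ring

/-- The currents whose components all lie in the ideal `I`. -/
def currentsIn (ι : Type*) (I : Ideal A) : Submodule A (A × (ι → A)) :=
  Submodule.prod I (Submodule.pi univ fun _ ↦ I)

omit [Fintype ι] in
theorem mem_currentsIn {I : Ideal A} {J : A × (ι → A)} :
    J ∈ currentsIn ι I ↔ J.1 ∈ I ∧ ∀ i, J.2 i ∈ I := by
  simp [currentsIn]

variable {I : Ideal A} (hI₀ : ∀ f ∈ I, D₀ f ∈ I) (hI : ∀ i, ∀ f ∈ I, D i f ∈ I)
include hI₀ hI

theorem divergence_mem {J : A × (ι → A)} (hJ : J ∈ currentsIn ι I) : divergence D₀ D J ∈ I := by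
  rw [divergence_apply]
  exact I.add_mem (hI₀ _ (mem_currentsIn.1 hJ).1)
    (I.sum_mem fun i _ ↦ hI i _ ((mem_currentsIn.1 hJ).2 i))

variable {z : A} (hz : z ∈ I)
include hz

theorem waveOp_mem : waveOp D₀ D z ∈ I := by
  rw [waveOp_apply]
  exact I.sub_mem (hI₀ _ (hI₀ _ hz)) (I.sum_mem fun i _ ↦ hI i _ (hI i _ hz))

omit [Fintype ι] in
theorem greenCurrent_mem (w : A) : greenCurrent D₀ D w z ∈ currentsIn ι I :=
  mem_currentsIn.2 ⟨I.sub_mem (I.mul_mem_left _ (hI₀ _ hz)) (I.mul_mem_right _ hz),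
    fun i ↦ I.sub_mem (I.mul_mem_right _ hz) (I.mul_mem_left _ (hI i _ hz))⟩

theorem energyCurrent_mem (ρ : A) : energyCurrent D₀ D ρ z ∈ currentsIn ι I :=
  mem_currentsIn.2 ⟨I.mul_mem_left _ (I.add_mem (I.pow_mem_of_mem (hI₀ _ hz) 2 two_pos)
      (I.sum_mem fun j _ ↦ I.pow_mem_of_mem (hI j _ hz) 2 two_pos)),
    fun i ↦ I.mul_mem_left _ (I.mul_mem_left _ (hI i _ hz))⟩

omit [Fintype ι] in
theorem zeroOrderCurrent_mem (q : A) : zeroOrderCurrent D₀ D q z ∈ currentsIn ι I :=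
  mem_currentsIn.2 ⟨I.mul_mem_left _ (hI₀ _ hz), fun i ↦
    I.sub_mem (I.mul_mem_left _ (I.pow_mem_of_mem hz 2 two_pos)) (I.mul_mem_left _ (hI i _ hz))⟩

theorem momentumCurrent_mem (X : ι → A) : momentumCurrent D₀ D X z ∈ currentsIn ι I := by
  have grad : ∑ j, X j * D j z ∈ I := I.sum_mem fun j _ ↦ I.mul_mem_left _ (hI j _ hz)
  exact mem_currentsIn.2 ⟨I.mul_mem_left _ grad, fun i ↦ I.sub_mem
    (I.mul_mem_left _ (I.sub_mem (I.sum_mem fun j _ ↦ I.pow_mem_of_mem (hI j _ hz) 2 two_pos)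
      (I.pow_mem_of_mem (hI₀ _ hz) 2 two_pos))) (I.mul_mem_left _ grad)⟩

end Currents

/-! ### Smooth functions as a differential algebra -/

section SmoothFn

variable {E F : Type*} [NormedAddCommGroup E] [NormedSpace ℝ E]
  [NormedAddCommGroup F] [NormedSpace ℝ F]

variable (E) in
/-- The smooth functions, as a subalgebra of all real functions on `E`. -/
def smoothSubalgebra : Subalgebra ℝ (E → ℝ) where
  carrier := {f | ContDiff ℝ (⊤ : ℕ∞) f}
  mul_mem' hf hg := show ContDiff ℝ (⊤ : ℕ∞) _ from hf.out.mul hg.out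
  add_mem' hf hg := show ContDiff ℝ (⊤ : ℕ∞) _ from hf.out.add hg.out
  algebraMap_mem' c := show ContDiff ℝ (⊤ : ℕ∞) fun _ ↦ c from contDiff_const

variable (E) in
/-- The algebra of smooth real functions on `E`. Constant vector fields act on it as derivations,
so that identities between differential expressions become identities in a commutative ring. -/
def SmoothFn : Type _ := smoothSubalgebra E

namespace SmoothFn

instance : CommRing (SmoothFn E) := inferInstanceAs (CommRing (smoothSubalgebra E))

instance : Algebra ℝ (SmoothFn E) := inferInstanceAs (Algebra ℝ (smoothSubalgebra E))

/-- The bundling of a smooth function. -/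
def mk (h : E → ℝ) (hh : ContDiff ℝ (⊤ : ℕ∞) h) : SmoothFn E := ⟨h, hh⟩

instance : FunLike (SmoothFn E) E ℝ where
  coe := Subtype.val
  coe_injective := Subtype.coe_injective

variable (f g : SmoothFn E) (p : E)

@[ext] theorem ext {f g : SmoothFn E} (h : ∀ p, f p = g p) : f = g := DFunLike.ext _ _ h

@[simp] theorem add_apply : (f + g) p = f p + g p := rfl

@[simp] theorem sub_apply : (f - g) p = f p - g p := rfl

@[simp] theorem neg_apply : (-f) p = -f p := rfl

@[simp] theorem mul_apply : (f * g) p = f p * g p := rfl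

@[simp] theorem pow_apply (k : ℕ) : (f ^ k) p = f p ^ k := rfl

@[simp] theorem smul_apply (c : ℝ) : (c • f) p = c * f p := rfl

@[simp] theorem zero_apply : (0 : SmoothFn E) p = 0 := rfl

@[simp] theorem one_apply : (1 : SmoothFn E) p = 1 := rfl

@[simp] theorem ofNat_apply (k : ℕ) [k.AtLeastTwo] : (ofNat(k) : SmoothFn E) p = ofNat(k) := rfl

@[simp] theorem natCast_apply (k : ℕ) : (k : SmoothFn E) p = k := rfl

@[simp] theorem sum_apply {ι : Type*} (s : Finset ι) (f : ι → SmoothFn E) :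
    (∑ i ∈ s, f i) p = ∑ i ∈ s, f i p :=
  (congrFun (map_sum (smoothSubalgebra E).val f s) p).trans (Finset.sum_apply _ _ _)

theorem contDiff : ContDiff ℝ (⊤ : ℕ∞) f := f.2

theorem differentiable : Differentiable ℝ f := f.contDiff.differentiable (by simp)

theorem continuous : Continuous f := f.contDiff.continuous

theorem contDiff_fderiv : ContDiff ℝ (⊤ : ℕ∞) (fderiv ℝ f) := f.contDiff.fderiv_right (by simp)

end SmoothFn

/-- The derivative in the constant direction `v`. -/
def dirDeriv (v : E) : Derivation ℝ (SmoothFn E) (SmoothFn E) :=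
  Derivation.mk'
    { toFun := fun f ↦
        .mk (fun p ↦ fderiv ℝ f p v) (f.contDiff_fderiv.clm_apply contDiff_const)
      map_add' := fun f g ↦ by
        ext p
        exact DFunLike.congr_fun (fderiv_add (f.differentiable p) (g.differentiable p)) v
      map_smul' := fun c f ↦ by
        ext p
        exact DFunLike.congr_fun (fderiv_const_smul (f.differentiable p) c) v }
    fun f g ↦ by
      ext p
      exact DFunLike.congr_fun (fderiv_mul (f.differentiable p) (g.differentiable p)) v

theorem dirDeriv_apply (v : E) (f : SmoothFn E) (p : E) : dirDeriv v f p = fderiv ℝ f p v := rfl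

theorem dirDeriv_comm (u v : E) (f : SmoothFn E) :
    dirDeriv u (dirDeriv v f) = dirDeriv v (dirDeriv u f) := by
  ext p
  have symm : IsSymmSndFDerivAt ℝ f p := f.contDiff.contDiffAt.isSymmSndFDerivAt
    (by simpa using WithTop.coe_le_coe.2 (le_top (a := (2 : ℕ∞))))
  have second (a b : E) : dirDeriv a (dirDeriv b f) p = fderiv ℝ (fderiv ℝ f) p a b := by
    change fderiv ℝ (fun y ↦ fderiv ℝ f y b) p a = _
    have hd := f.contDiff_fderiv.differentiable (by simp) p
    simp [fderiv_clm_apply hd (differentiableAt_const b)]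
  rw [second, second, symm u v]

theorem dirDeriv_neg (v : E) (f : SmoothFn E) : dirDeriv (-v) f = -dirDeriv v f := by
  ext p
  simp [dirDeriv_apply]

/-- Composition with a continuous affine map. -/
def affineComp (g : E →ᴬ[ℝ] F) : SmoothFn F →ₐ[ℝ] SmoothFn E where
  toFun f := .mk (f ∘ g) (f.contDiff.comp g.contDiff)
  map_one' := rfl
  map_mul' _ _ := rfl
  map_zero' := rfl
  map_add' _ _ := rfl
  commutes' _ := rfl

theorem affineComp_apply (g : E →ᴬ[ℝ] F) (f : SmoothFn F) (p : E) : affineComp g f p = f (g p) :=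
  rfl

theorem dirDeriv_affineComp (v : E) (g : E →ᴬ[ℝ] F) (f : SmoothFn F) :
    dirDeriv v (affineComp g f) = affineComp g (dirDeriv (g.contLinear v) f) := by
  ext p
  have h := (f.differentiable (g p)).hasFDerivAt.comp p g.hasFDerivAt
  exact DFunLike.congr_fun h.fderiv v

/-- The ideal of smooth functions with compact support contained in `Ω`. -/
def testFn (Ω : Set E) : Ideal (SmoothFn E) where
  carrier := {f | HasCompactSupport f ∧ tsupport f ⊆ Ω}
  zero_mem' := ⟨HasCompactSupport.zero,
    (tsupport_eq_empty_iff (f := (0 : E → ℝ))).2 rfl ▸ empty_subset Ω⟩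
  add_mem' hf hg := ⟨hf.1.add hg.1, (tsupport_add _ _).trans (union_subset hf.2 hg.2)⟩
  smul_mem' _ _ hf :=
    ⟨hf.1.mul_left, (closure_mono (Function.support_mul_subset_right _ _)).trans hf.2⟩

theorem dirDeriv_mem_testFn {Ω : Set E} (v : E) {f : SmoothFn E} (hf : f ∈ testFn Ω) :
    dirDeriv v f ∈ testFn Ω :=
  ⟨hf.1.fderiv_apply ℝ v, (tsupport_fderiv_apply_subset ℝ v).trans hf.2⟩

end SmoothFn

section Integration

variable {E : Type*} [NormedAddCommGroup E] [NormedSpace ℝ E] [MeasurableSpace E] [BorelSpace E]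
  {Ω : Set E} {f : SmoothFn E}

theorem integrable_of_mem_testFn {μ : Measure E} [IsFiniteMeasureOnCompacts μ]
    (hf : f ∈ testFn Ω) : Integrable f μ :=
  (f.continuous).integrable_of_hasCompactSupport hf.1

theorem integral_dirDeriv_eq_zero [FiniteDimensional ℝ E] (μ : Measure E) [μ.IsAddHaarMeasure]
    (hf : f ∈ testFn Ω) (v : E) : ∫ p, dirDeriv v f p ∂μ = 0 := by
  simpa using! integral_mul_fderiv_eq_neg_fderiv_mul_of_integrable (μ := μ)
    (f := fun _ ↦ (1 : ℝ)) (g := f) (v := v) (by simp)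
    (by simpa using! integrable_of_mem_testFn (dirDeriv_mem_testFn v hf))
    (by simpa using! integrable_of_mem_testFn hf)
    (fun _ _ ↦ differentiableAt_const _) fun p _ ↦ f.differentiable p

end Integration

/-! ### Space-time -/

section SpaceTime

variable {n : ℕ}

instance : (volume : Measure (ℝ × Eu n)).IsAddHaarMeasure := by
  rw [Measure.volume_eq_prod]
  infer_instance

/-- The partial derivative `∂ᵢ` of functions on `ℝⁿ`. -/
abbrev partialDeriv (i : Fin n) : Derivation ℝ (SmoothFn (Eu n)) (SmoothFn (Eu n)) :=
  dirDeriv (EuclideanSpace.single i 1)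

/-- The time derivative `∂ₜ` of functions on `ℝ × ℝⁿ`. -/
abbrev timeDeriv : Derivation ℝ (SmoothFn (ℝ × Eu n)) (SmoothFn (ℝ × Eu n)) := dirDeriv (1, 0)

/-- The space derivative `∂ᵢ` of functions on `ℝ × ℝⁿ`. -/
abbrev spaceDeriv (i : Fin n) : Derivation ℝ (SmoothFn (ℝ × Eu n)) (SmoothFn (ℝ × Eu n)) :=
  dirDeriv (0, EuclideanSpace.single i 1)

/-- The d'Alembertian `□ = ∂ₜ² - Δ` on smooth functions of `ℝ × ℝⁿ`. -/
abbrev box : SmoothFn (ℝ × Eu n) →ₗ[ℝ] SmoothFn (ℝ × Eu n) := waveOp timeDeriv spaceDeriv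

section TestFn

variable {Ω : Set (ℝ × Eu n)}

theorem timeDeriv_mem_testFn : ∀ f ∈ testFn Ω, timeDeriv f ∈ testFn Ω :=
  fun _ ↦ dirDeriv_mem_testFn (1, 0)

theorem spaceDeriv_mem_testFn : ∀ i, ∀ f ∈ testFn Ω, spaceDeriv i f ∈ testFn Ω :=
  fun i _ ↦ dirDeriv_mem_testFn (0, EuclideanSpace.single i 1)

theorem box_mem_testFn {z : SmoothFn (ℝ × Eu n)} (hz : z ∈ testFn Ω) : box z ∈ testFn Ω :=
  waveOp_mem timeDeriv_mem_testFn spaceDeriv_mem_testFn hz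

end TestFn

/-- The time-independent function on space-time given by a function of `x`. -/
def lift : SmoothFn (Eu n) →ₐ[ℝ] SmoothFn (ℝ × Eu n) :=
  affineComp (ContinuousLinearMap.snd ℝ ℝ (Eu n)).toContinuousAffineMap

@[simp]
theorem lift_apply (f : SmoothFn (Eu n)) (p : ℝ × Eu n) : lift f p = f p.2 := rfl

@[simp]
theorem timeDeriv_lift (f : SmoothFn (Eu n)) : timeDeriv (lift f) = 0 := by
  ext p
  simp [lift, dirDeriv_affineComp, affineComp_apply, dirDeriv_apply]

@[simp]
theorem spaceDeriv_lift (i : Fin n) (f : SmoothFn (Eu n)) :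
    spaceDeriv i (lift f) = lift (partialDeriv i f) := by
  simp [lift, dirDeriv_affineComp]

/-- The restriction of a function on space-time to a fixed time. -/
def slice (t : ℝ) : SmoothFn (ℝ × Eu n) →ₐ[ℝ] SmoothFn (Eu n) :=
  affineComp ((ContinuousAffineMap.const ℝ (Eu n) t).prod (ContinuousAffineMap.id ℝ (Eu n)))

@[simp]
theorem slice_apply (t : ℝ) (f : SmoothFn (ℝ × Eu n)) (x : Eu n) : slice t f x = f (t, x) := rfl

theorem partialDeriv_slice (i : Fin n) (t : ℝ) (f : SmoothFn (ℝ × Eu n)) :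
    partialDeriv i (slice t f) = slice t (spaceDeriv i f) := by
  simp only [slice, dirDeriv_affineComp]
  rfl

theorem slice_mem_testFn {Ω : Set (ℝ × Eu n)} {f : SmoothFn (ℝ × Eu n)} (hf : f ∈ testFn Ω)
    (t : ℝ) : slice t f ∈ testFn (univ : Set (Eu n)) :=
  ⟨HasCompactSupport.intro (hf.1.isCompact.image continuous_snd) fun x hx ↦
    show f (t, x) = 0 from
      image_eq_zero_of_notMem_tsupport fun h ↦ hx ⟨(t, x), h, rfl⟩, subset_univ _⟩

theorem hasDerivAt_time (f : SmoothFn (ℝ × Eu n)) (t : ℝ) (x : Eu n) :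
    HasDerivAt (fun s ↦ f (s, x)) (timeDeriv f (t, x)) t :=
  (f.differentiable (t, x)).hasFDerivAt.comp_hasDerivAt t
    ((hasDerivAt_id t).prodMk (hasDerivAt_const t x))

variable (n) in
/-- The space-time slab `[0,T] × ℝⁿ`. -/
def slab (T : ℝ) : Set (ℝ × Eu n) := Icc 0 T ×ˢ univ

theorem measurableSet_slab (T : ℝ) : MeasurableSet (slab n T) :=
  measurableSet_Icc.prod MeasurableSet.univ

variable {Ω : Set (ℝ × Eu n)} {f : SmoothFn (ℝ × Eu n)} {T : ℝ}

theorem setIntegral_slab_spaceDeriv (hf : f ∈ testFn Ω) (i : Fin n) :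
    ∫ p in slab n T, spaceDeriv i f p = 0 := by
  have slices (t : ℝ) : ∫ x, spaceDeriv i f (t, x) = 0 := by
    simpa only [partialDeriv_slice, slice_apply] using
      integral_dirDeriv_eq_zero volume (slice_mem_testFn hf t) (EuclideanSpace.single i 1)
  rw [slab, Measure.volume_eq_prod, setIntegral_prod]
  · simp [slices]
  · exact (integrable_of_mem_testFn (dirDeriv_mem_testFn _ hf)).integrableOn

theorem setIntegral_slab_timeDeriv (hT : 0 ≤ T) (hf : f ∈ testFn {p | p.1 < T}) :
    ∫ p in slab n T, timeDeriv f p = -∫ x, f (0, x) := by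
  have terminal (x : Eu n) : f (T, x) = 0 :=
    image_eq_zero_of_notMem_tsupport fun h ↦ (lt_irrefl T) (hf.2 h)
  have hint : Integrable (timeDeriv f)
      ((volume.restrict (Icc 0 T)).prod (volume.restrict (univ : Set (Eu n)))) := by
    rw [Measure.prod_restrict, ← Measure.volume_eq_prod]
    exact (integrable_of_mem_testFn (dirDeriv_mem_testFn _ hf)).integrableOn
  rw [slab, Measure.volume_eq_prod, ← Measure.prod_restrict, integral_prod_symm _ hint,
    Measure.restrict_univ, ← integral_neg]
  congr 1 with x
  rw [integral_Icc_eq_integral_Ioc, ← intervalIntegral.integral_of_le hT,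
    intervalIntegral.integral_eq_sub_of_hasDerivAt (fun t _ ↦ hasDerivAt_time f t x)]
  · simp [terminal]
  · exact (((timeDeriv f).continuous).comp (by fun_prop)).intervalIntegrable _ _

/-- The flux through `t = T` is absent because the current vanishes near there. -/
theorem setIntegral_slab_divergence (hT : 0 ≤ T)
    {J : SmoothFn (ℝ × Eu n) × (Fin n → SmoothFn (ℝ × Eu n))}
    (hJ : J ∈ currentsIn (Fin n) (testFn {p : ℝ × Eu n | p.1 < T})) :
    ∫ p in slab n T, divergence timeDeriv spaceDeriv J p = -∫ x, J.1 (0, x) := by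
  obtain ⟨h₀, h⟩ := mem_currentsIn.1 hJ
  have int₀ := integrable_of_mem_testFn (μ := volume) (dirDeriv_mem_testFn (1, 0) h₀)
  have int (i : Fin n) := integrable_of_mem_testFn (μ := volume)
    (dirDeriv_mem_testFn (0, EuclideanSpace.single i 1) (h i))
  simp only [divergence_apply, SmoothFn.add_apply, SmoothFn.sum_apply]
  rw [integral_add int₀.integrableOn (integrable_finsetSum _ fun i _ ↦ (int i).integrableOn),
    integral_finsetSum _ fun i _ ↦ (int i).integrableOn, setIntegral_slab_timeDeriv hT h₀,
    Finset.sum_eq_zero fun i _ ↦ setIntegral_slab_spaceDeriv (h i) i, add_zero]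

end SpaceTime

/-! ### Powers of the Japanese bracket -/

section Weights

variable {n : ℕ}

/-- The weight `⟨x⟩ᵐ`. -/
def bracketPow (m : ℝ) : SmoothFn (Eu n) :=
  .mk (fun x ↦ (1 + ‖x‖ ^ 2) ^ (m / 2)) <|
    (contDiff_const.add (contDiff_id.norm_sq ℝ)).rpow_const_of_ne fun x ↦ by
      have := sq_nonneg ‖x‖
      simp only [id]
      linarith

theorem bracketPow_apply (m : ℝ) (x : Eu n) : bracketPow m x = jap x ^ m := by
  rw [jap, sqrt_eq_rpow, ← rpow_mul (by positivity), one_div_mul_eq_div]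
  rfl

theorem one_le_jap (x : Eu n) : 1 ≤ jap x := one_le_sqrt.2 (by linarith [sq_nonneg ‖x‖])

theorem jap_pos (x : Eu n) : 0 < jap x := zero_lt_one.trans_le (one_le_jap x)

theorem sq_jap (x : Eu n) : jap x ^ 2 = 1 + ‖x‖ ^ 2 := sq_sqrt (by positivity)

theorem bracketPow_pos (m : ℝ) (x : Eu n) : 0 < bracketPow m x := by
  rw [bracketPow_apply]
  exact rpow_pos_of_pos (jap_pos x) m

theorem bracketPow_le_one {m : ℝ} (hm : m ≤ 0) (x : Eu n) : bracketPow m x ≤ 1 := by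
  rw [bracketPow_apply]
  exact rpow_le_one_of_one_le_of_nonpos (one_le_jap x) hm

theorem bracketPow_mul_bracketPow (m k : ℝ) :
    (bracketPow m * bracketPow k : SmoothFn (Eu n)) = bracketPow (m + k) := by
  ext x
  simp [bracketPow_apply, rpow_add (jap_pos x)]

theorem bracketPow_pow (m : ℝ) (k : ℕ) :
    (bracketPow m ^ k : SmoothFn (Eu n)) = bracketPow (k * m) := by
  ext x
  simp [bracketPow_apply, mul_comm, rpow_mul_natCast (jap_pos x).le]

theorem bracketPow_mul_bracketPow_neg (m : ℝ) (x : Eu n) :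
    bracketPow m x * bracketPow (-m) x = 1 := by
  rw [bracketPow_apply, bracketPow_apply, ← rpow_add (jap_pos x), add_neg_cancel, rpow_zero]

/-- The coordinate function `xᵢ`. -/
def coord (i : Fin n) : SmoothFn (Eu n) :=
  .mk (fun x ↦ x i) (EuclideanSpace.proj (𝕜 := ℝ) i).contDiff

@[simp]
theorem coord_apply (i : Fin n) (x : Eu n) : coord i x = x i := rfl

theorem partialDeriv_coord (i j : Fin n) : partialDeriv i (coord j) = if i = j then 1 else 0 := by
  ext x
  have h : HasFDerivAt (coord j) (EuclideanSpace.proj (𝕜 := ℝ) j) x :=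
    (EuclideanSpace.proj (𝕜 := ℝ) j).hasFDerivAt
  rw [dirDeriv_apply, h.fderiv]
  split_ifs with hij <;> simp [hij, Ne.symm]

theorem partialDeriv_bracketPow (i : Fin n) (m : ℝ) :
    partialDeriv i (bracketPow m) = m • (coord i * bracketPow (m - 2)) := by
  ext x
  have h : HasFDerivAt (bracketPow m) _ x :=
    ((hasStrictFDerivAt_norm_sq x).hasFDerivAt.const_add 1).rpow_const (p := m / 2)
      (Or.inl (by positivity))
  rw [dirDeriv_apply, h.fderiv]
  have lower : bracketPow (m - 2) x = (1 + ‖x‖ ^ 2) ^ (m / 2 - 1) := by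
    rw [show m / 2 - 1 = (m - 2) / 2 by ring]
    rfl
  simp [EuclideanSpace.inner_single_right, lower]
  ring

theorem norm_sq_mul_bracketPow_neg_one_sq (x : Eu n) :
    ‖x‖ ^ 2 * bracketPow (-1) x ^ 2 = 1 - bracketPow (-1) x ^ 2 := by
  have := (jap_pos x).ne'
  rw [bracketPow_apply, rpow_neg_one, eq_sub_of_add_eq' (sq_jap x).symm]
  field_simp

theorem norm_sq_mul_bracketPow_neg_one_sq_le_one (x : Eu n) :
    ‖x‖ ^ 2 * bracketPow (-1) x ^ 2 ≤ 1 := by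
  rw [norm_sq_mul_bracketPow_neg_one_sq]
  linarith [sq_nonneg (bracketPow (-1) x)]

theorem partialDeriv_bracketPow_neg_one_pow (i : Fin n) (j : ℕ) :
    partialDeriv i (bracketPow (-1) ^ j) = -((j : ℝ) • (coord i * bracketPow (-1) ^ (j + 2))) := by
  have h : (j : ℝ) * -1 - 2 = (j + 2 : ℕ) * -1 := by push_cast; ring
  rw [bracketPow_pow, bracketPow_pow, partialDeriv_bracketPow, h, mul_neg_one, neg_smul]

theorem partialDeriv_bracketPow_neg (i : Fin n) (ε : ℝ) :
    partialDeriv i (bracketPow (-ε)) =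
      -(ε • (coord i * bracketPow (-1) ^ 2 * bracketPow (-ε))) := by
  have h : -ε - 2 = (2 : ℕ) * (-1) + -ε := by push_cast; ring
  rw [partialDeriv_bracketPow, bracketPow_pow, mul_assoc, bracketPow_mul_bracketPow, neg_smul, h]

end Weights

/-! ### The Morawetz multiplier -/

section Multiplier

variable {n : ℕ} {ε : ℝ}

/-- The radial function `⟨x⟩⁻ʲ (α - β ⟨x⟩⁻ᵋ)`; the coefficients of the multiplier are sums of
such functions. -/
def radialFn (ε : ℝ) (j : ℕ) (α β : ℝ) : SmoothFn (Eu n) :=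
  bracketPow (-1) ^ j * (α • 1 - β • bracketPow (-ε))

theorem radialFn_apply (ε : ℝ) (j : ℕ) (α β : ℝ) (x : Eu n) :
    radialFn ε j α β x = bracketPow (-1) x ^ j * (α - β * bracketPow (-ε) x) := by
  simp [radialFn]

theorem partialDeriv_radialFn (i : Fin n) (j : ℕ) (α β : ℝ) :
    partialDeriv i (radialFn ε j α β) =
      -(coord i * radialFn ε (j + 2) (j * α) ((j + ε) * β)) := by
  rw [radialFn, Derivation.leibniz, map_sub, Derivation.map_smul, Derivation.map_smul,
    Derivation.map_one_eq_zero, partialDeriv_bracketPow_neg, partialDeriv_bracketPow_neg_one_pow]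
  ext x
  simp only [smul_eq_mul, SmoothFn.add_apply, SmoothFn.smul_apply, SmoothFn.mul_apply,
    SmoothFn.pow_apply, coord_apply, SmoothFn.neg_apply, SmoothFn.sub_apply, SmoothFn.one_apply,
    SmoothFn.zero_apply, radialFn_apply]
  ring

theorem sum_partialDeriv_coord_mul_radialFn (j : ℕ) (α β : ℝ) (x : Eu n) :
    (∑ i, partialDeriv i (coord i * radialFn ε j α β)) x =
      n * radialFn ε j α β x - ‖x‖ ^ 2 * radialFn ε (j + 2) (j * α) ((j + ε) * β) x := by
  simp only [Derivation.leibniz, partialDeriv_coord, partialDeriv_radialFn, smul_eq_mul, if_true,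
    SmoothFn.sum_apply, SmoothFn.add_apply, SmoothFn.mul_apply, SmoothFn.neg_apply, coord_apply,
    SmoothFn.one_apply, Finset.sum_add_distrib, EuclideanSpace.real_norm_sq_eq, Finset.sum_mul]
  simp only [Finset.sum_const, Finset.card_univ, Fintype.card_fin, nsmul_eq_mul, pow_two,
    mul_neg, mul_one, mul_assoc, Finset.sum_neg_distrib]
  ring

theorem laplacian_radialFn (j : ℕ) (α β : ℝ) (x : Eu n) :
    (∑ i, partialDeriv i (partialDeriv i (radialFn ε j α β))) x =
      radialFn ε (j + 2) (j * (j + 2 - n) * α) ((j + ε) * (j + 2 + ε - n) * β) x -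
        radialFn ε (j + 4) (j * (j + 2) * α) ((j + ε) * (j + 2 + ε) * β) x := by
  simp only [partialDeriv_radialFn _ j, map_neg, Finset.sum_neg_distrib, SmoothFn.neg_apply,
    sum_partialDeriv_coord_mul_radialFn, radialFn_apply]
  push_cast
  linear_combination
    bracketPow (-1) x ^ (j + 2) * ((j + 2) * (j * α) - (j + 2 + ε) * ((j + ε) * β) *
      bracketPow (-ε) x) * norm_sq_mul_bracketPow_neg_one_sq x

variable (n ε) in
/-- The radial coefficient `a` of the multiplier field `a x`. -/
def radialCoef : SmoothFn (Eu n) := radialFn ε 1 1 (1 / 4)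

variable (n ε) in
/-- The radial function `b` with `∇a = b x`, where `a` is `radialCoef`. -/
def radialSlope : SmoothFn (Eu n) := radialFn ε 3 (-1) (-(1 + ε) / 4)

variable (n ε) in
/-- The coefficient `q = ((n - 1) a - b) / 2` of the zero-order multiplier. -/
def zeroOrderCoef : SmoothFn (Eu n) :=
  (2⁻¹ : ℝ) • ((n - 1 : ℝ) • radialCoef n ε - radialSlope n ε)

theorem radialCoef_apply (x : Eu n) :
    radialCoef n ε x = bracketPow (-1) x * (1 - bracketPow (-ε) x / 4) := by
  rw [radialCoef, radialFn_apply]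
  ring

theorem radialSlope_apply (x : Eu n) :
    radialSlope n ε x = -(bracketPow (-1) x ^ 3 * (1 - (1 + ε) / 4 * bracketPow (-ε) x)) := by
  rw [radialSlope, radialFn_apply]
  ring

theorem zeroOrderCoef_apply (x : Eu n) :
    zeroOrderCoef n ε x = ((n - 1) * radialCoef n ε x - radialSlope n ε x) / 2 := by
  simp only [zeroOrderCoef, SmoothFn.smul_apply, SmoothFn.sub_apply]
  ring

theorem partialDeriv_radialCoef (i : Fin n) :
    partialDeriv i (radialCoef n ε) = coord i * radialSlope n ε := by
  rw [radialCoef, partialDeriv_radialFn]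
  ext x
  simp only [SmoothFn.neg_apply, SmoothFn.mul_apply, radialSlope, radialFn_apply]
  push_cast
  ring

theorem partialDeriv_coord_mul_radialCoef (i j : Fin n) :
    partialDeriv i (coord j * radialCoef n ε) =
      (if i = j then radialCoef n ε else 0) + coord i * coord j * radialSlope n ε := by
  rw [Derivation.leibniz, partialDeriv_radialCoef, partialDeriv_coord]
  split_ifs <;> simp only [smul_eq_mul] <;> ring

/-- The deformation tensor `a δᵢⱼ + b xᵢ xⱼ` of the multiplier field has the radial eigenvalue
`a + |x|² b`. -/
theorem radialCoef_add_norm_sq_mul_radialSlope (x : Eu n) :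
    radialCoef n ε x + ‖x‖ ^ 2 * radialSlope n ε x =
      ε / 4 * (bracketPow (-1) x * bracketPow (-ε) x) - radialSlope n ε x := by
  rw [radialCoef_apply, radialSlope_apply]
  linear_combination
    -(bracketPow (-1) x * (1 - (1 + ε) / 4 * bracketPow (-ε) x)) *
      norm_sq_mul_bracketPow_neg_one_sq x

theorem norm_sq_mul_radialCoef_sq_le_one (hε : 0 ≤ ε) (x : Eu n) :
    ‖x‖ ^ 2 * radialCoef n ε x ^ 2 ≤ 1 := by
  have e₀ := bracketPow_pos (-ε) x
  have e₁ := bracketPow_le_one (neg_nonpos.2 hε) x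
  rw [radialCoef_apply, mul_pow, ← mul_assoc]
  exact mul_le_one₀ (norm_sq_mul_bracketPow_neg_one_sq_le_one x) (sq_nonneg _)
    (pow_le_one₀ (by linarith) (by linarith))

theorem zeroOrderCoef_eq_radialFn_add :
    zeroOrderCoef n ε =
      radialFn ε 1 ((n - 1) / 2) ((n - 1) / 8) + radialFn ε 3 (1 / 2) ((1 + ε) / 8) := by
  ext x
  simp only [zeroOrderCoef, radialCoef, radialSlope, SmoothFn.smul_apply, SmoothFn.sub_apply,
    SmoothFn.add_apply, radialFn_apply]
  ring

theorem laplacian_zeroOrderCoef (x : Eu n) :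
    (∑ i, partialDeriv i (partialDeriv i (zeroOrderCoef n ε))) x =
      -(bracketPow (-1) x ^ 3 * ((n - 1) * (n - 3) -
            (1 + ε) * bracketPow (-ε) x / 4 * ((n - 1) * (n - 3 - ε))) +
        bracketPow (-1) x ^ 5 * (6 * (n - 3) -
            (1 + ε) * bracketPow (-ε) x * (3 + ε) / 4 * (2 * n - 6 - ε)) +
        bracketPow (-1) x ^ 7 * (15 -
            (1 + ε) * bracketPow (-ε) x * (3 + ε) * (5 + ε) / 4)) / 2 := by
  simp only [zeroOrderCoef_eq_radialFn_add, map_add, Finset.sum_add_distrib, SmoothFn.add_apply,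
    laplacian_radialFn, radialFn_apply]
  push_cast
  ring

section Bounds

variable (h₀ : 0 ≤ ε) (h₁ : ε ≤ 1) (x : Eu n)
include h₀ h₁

theorem radialSlope_nonpos : radialSlope n ε x ≤ 0 := by
  have u₀ := bracketPow_pos (-1) x
  have := bracketPow_pos (-ε) x
  have e₁ := bracketPow_le_one (neg_nonpos.2 h₀) x
  rw [radialSlope_apply, neg_nonpos]
  exact mul_nonneg (by positivity) (by nlinarith)

theorem abs_zeroOrderCoef_le (hn : 1 ≤ n) :
    |zeroOrderCoef n ε x| ≤ n / 2 * bracketPow (-1) x := by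
  have u₀ := bracketPow_pos (-1) x
  have u₁ := bracketPow_le_one (show (-1 : ℝ) ≤ 0 by norm_num) x
  have e₀ := bracketPow_pos (-ε) x
  have e₁ := bracketPow_le_one (neg_nonpos.2 h₀) x
  have hn' : (1 : ℝ) ≤ n := mod_cast hn
  have slope := radialSlope_nonpos h₀ h₁ x
  have coef : 0 ≤ radialCoef n ε x ∧ radialCoef n ε x ≤ bracketPow (-1) x := by
    rw [radialCoef_apply]
    constructor <;> nlinarith
  have slope' : -radialSlope n ε x ≤ bracketPow (-1) x := by
    rw [radialSlope_apply, neg_neg]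
    calc bracketPow (-1) x ^ 3 * (1 - (1 + ε) / 4 * bracketPow (-ε) x)
        ≤ bracketPow (-1) x ^ 3 * 1 := by gcongr; nlinarith
      _ ≤ bracketPow (-1) x := by
        rw [mul_one]
        exact pow_le_of_le_one u₀.le u₁ three_ne_zero
  rw [zeroOrderCoef_apply, abs_of_nonneg (by nlinarith)]
  nlinarith [mul_le_mul_of_nonneg_left coef.2 (sub_nonneg.2 hn')]

theorem laplacian_zeroOrderCoef_le (hn : 3 ≤ n) :
    (∑ i, partialDeriv i (partialDeriv i (zeroOrderCoef n ε))) x ≤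
      -(ε / 4 * (bracketPow (-1) x ^ 3 * bracketPow (-ε) x)) := by
  have u₀ := bracketPow_pos (-1) x
  have e₀ := bracketPow_pos (-ε) x
  have e₁ := bracketPow_le_one (neg_nonpos.2 h₀) x
  rw [laplacian_zeroOrderCoef]
  set u := bracketPow (-1) x
  set e := bracketPow (-ε) x
  obtain ⟨m, hm, hnm⟩ : ∃ m : ℝ, 0 ≤ m ∧ (n : ℝ) = m + 3 :=
    ⟨n - 3, sub_nonneg.2 (mod_cast hn), by ring⟩
  have εe : 0 ≤ ε * e := by positivity
  have c₁ : (1 + ε) * e ≤ 2 := by nlinarith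
  have c₃ : (1 + ε) * e * (3 + ε) ≤ 2 * 4 := by gcongr; linarith
  have c₅ : (1 + ε) * e * (3 + ε) * (5 + ε) ≤ 2 * 4 * 6 := by gcongr; linarith
  have cubic : ε / 2 * e ≤ (n - 1) * (n - 3) - (1 + ε) * e / 4 * ((n - 1) * (n - 3 - ε)) := by
    rw [hnm]
    nlinarith [mul_nonneg hm (by positivity : 0 ≤ m + 2), mul_nonneg hm εe, mul_nonneg h₀ εe,
      mul_nonneg hm (mul_nonneg h₀ εe),
      mul_le_mul_of_nonneg_left c₁ (mul_nonneg hm (by positivity : 0 ≤ m + 2))]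
  have quintic : 0 ≤ 6 * (n - 3) - (1 + ε) * e * (3 + ε) / 4 * (2 * n - 6 - ε) := by
    rw [hnm]
    nlinarith [mul_le_mul_of_nonneg_left c₃ hm,
      (by positivity : 0 ≤ (1 + ε) * e * (3 + ε) * ε)]
  have septic : 0 ≤ 15 - (1 + ε) * e * (3 + ε) * (5 + ε) / 4 := by linarith
  linarith [mul_le_mul_of_nonneg_left cubic (pow_pos u₀ 3).le,
    mul_nonneg (pow_pos u₀ 5).le quintic, mul_nonneg (pow_pos u₀ 7).le septic]

end Bounds

end Multiplier

section Hardy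

variable {n : ℕ}

theorem sum_mul_sq_le_norm_sq_mul_sum_sq (x : Eu n) (v : Fin n → ℝ) :
    (∑ i, x i * v i) ^ 2 ≤ ‖x‖ ^ 2 * ∑ i, v i ^ 2 := by
  rw [EuclideanSpace.real_norm_sq_eq]
  exact Finset.sum_mul_sq_le_sq_mul_sq _ _ _

theorem sum_partialDeriv_coord_mul_bracketPow_mul_sq (u : SmoothFn (Eu n)) (x : Eu n) :
    (∑ i, partialDeriv i (coord i * (bracketPow (-1) * u) ^ 2)) x =
      (n * bracketPow (-1) x ^ 2 - 2 * ‖x‖ ^ 2 * bracketPow (-1) x ^ 4) * u x ^ 2 +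
        2 * bracketPow (-1) x ^ 2 * u x * ∑ i, x i * partialDeriv i u x := by
  have summand (i : Fin n) : partialDeriv i (coord i * (bracketPow (-1) * u) ^ 2) x =
      bracketPow (-1) x ^ 2 * u x ^ 2 - 2 * bracketPow (-1) x ^ 4 * u x ^ 2 * x i ^ 2 +
        2 * bracketPow (-1) x ^ 2 * u x * (x i * partialDeriv i u x) := by
    rw [mul_pow, Derivation.leibniz, Derivation.leibniz, Derivation.leibniz_pow _ u,
      partialDeriv_bracketPow_neg_one_pow, partialDeriv_coord, if_pos rfl]
    simp only [smul_eq_mul, nsmul_eq_mul, SmoothFn.add_apply, SmoothFn.mul_apply,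
      SmoothFn.pow_apply, SmoothFn.neg_apply, SmoothFn.smul_apply, SmoothFn.one_apply,
      SmoothFn.natCast_apply, coord_apply]
    push_cast
    ring
  simp only [SmoothFn.sum_apply, summand, Finset.sum_add_distrib, Finset.sum_sub_distrib,
    ← Finset.mul_sum, EuclideanSpace.real_norm_sq_eq, Finset.sum_const, Finset.card_univ,
    Fintype.card_fin, nsmul_eq_mul]
  ring

theorem half_bracketPow_mul_sq_sub_le_sum_partialDeriv (hn : 3 ≤ n) (u : SmoothFn (Eu n))
    (x : Eu n) :
    1 / 2 * ((bracketPow (-1) * u) ^ 2 : SmoothFn (Eu n)) x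
        - 2 * (∑ i, partialDeriv i u ^ 2) x ≤
      (∑ i, partialDeriv i (coord i * (bracketPow (-1) * u) ^ 2)) x := by
  have hn' : (3 : ℝ) ≤ n := mod_cast hn
  have radius := norm_sq_mul_bracketPow_neg_one_sq x
  have cauchy := sum_mul_sq_le_norm_sq_mul_sum_sq x fun i ↦ partialDeriv i u x
  rw [sum_partialDeriv_coord_mul_bracketPow_mul_sq]
  simp only [SmoothFn.mul_apply, SmoothFn.pow_apply, SmoothFn.sum_apply]
  set υ := bracketPow (-1) x
  set P := ∑ i, x i * partialDeriv i u x
  set N := ∑ i, partialDeriv i u x ^ 2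
  have radial : υ ^ 2 * P ^ 2 ≤ N := by
    have hN : 0 ≤ N := by positivity
    nlinarith [mul_le_mul_of_nonneg_left cauchy (sq_nonneg υ), mul_nonneg hN (sq_nonneg υ)]
  have : ‖x‖ ^ 2 * υ ^ 4 = υ ^ 2 - υ ^ 4 := by linear_combination υ ^ 2 * radius
  nlinarith [sq_nonneg (υ * u x + 2 * υ * P), sq_nonneg (υ ^ 2 * u x), sq_nonneg (υ * u x)]

theorem integral_bracketPow_mul_sq_le (hn : 3 ≤ n) {Ω : Set (Eu n)}
    {u : SmoothFn (Eu n)} (hu : u ∈ testFn Ω) :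
    ∫ x, ((bracketPow (-1) * u) ^ 2 : SmoothFn (Eu n)) x ≤
      4 * ∫ x, (∑ i, partialDeriv i u ^ 2) x := by
  have weighted : (bracketPow (-1) * u) ^ 2 ∈ testFn Ω :=
    Ideal.pow_mem_of_mem _ (Ideal.mul_mem_left _ _ hu) 2 two_pos
  have gradSq : ∑ i, partialDeriv i u ^ 2 ∈ testFn Ω :=
    Ideal.sum_mem _ fun i _ ↦
      Ideal.pow_mem_of_mem _ (dirDeriv_mem_testFn (EuclideanSpace.single i 1) hu) 2 two_pos
  have flux (i : Fin n) : partialDeriv i (coord i * ((bracketPow (-1) * u) ^ 2)) ∈ testFn Ω :=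
    dirDeriv_mem_testFn _ (Ideal.mul_mem_left _ _ weighted)
  have noFlux : ∫ x, (∑ i, partialDeriv i (coord i * ((bracketPow (-1) * u) ^ 2))) x = 0 := by
    simp only [SmoothFn.sum_apply]
    rw [integral_finsetSum _ fun i _ ↦ integrable_of_mem_testFn (flux i)]
    exact Finset.sum_eq_zero fun i _ ↦
      integral_dirDeriv_eq_zero volume (Ideal.mul_mem_left _ _ weighted) _
  have hint := integral_mono (μ := volume)
    (((integrable_of_mem_testFn weighted).const_mul (1 / 2)).sub
      ((integrable_of_mem_testFn gradSq).const_mul 2))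
    (integrable_of_mem_testFn (Ideal.sum_mem _ fun i _ ↦ flux i))
    (half_bracketPow_mul_sq_sub_le_sum_partialDeriv hn u)
  rw [noFlux, integral_sub' ((integrable_of_mem_testFn weighted).const_mul _)
    ((integrable_of_mem_testFn gradSq).const_mul _), integral_const_mul, integral_const_mul] at hint
  linarith

end Hardy

/-! ### The local energy estimate -/

section LocalEnergy

variable {n : ℕ} (ε : ℝ) (z : SmoothFn (ℝ × Eu n))

/-- The multiplier `a x·∇z + q z - 2n ∂ₜz`. -/
def multiplier : SmoothFn (ℝ × Eu n) :=
  lift (radialCoef n ε) * ∑ i, lift (coord i) * spaceDeriv i z + lift (zeroOrderCoef n ε) * z -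
    (2 * n : ℝ) • timeDeriv z

/-- The current whose divergence is `2 □z` times the multiplier, up to a definite term. The
energy flux makes its flux through a time slice nonpositive. -/
def morawetzCurrent : SmoothFn (ℝ × Eu n) × (Fin n → SmoothFn (ℝ × Eu n)) :=
  momentumCurrent timeDeriv spaceDeriv (fun i ↦ lift (coord i * radialCoef n ε)) z +
    zeroOrderCurrent timeDeriv spaceDeriv (lift (zeroOrderCoef n ε)) z -
    (2 * n : ℝ) • energyCurrent timeDeriv spaceDeriv 1 z

/-- The density `(∂ₜz)² + |∇z|² + ⟨x⟩⁻² z²` controlled by the Morawetz estimate. -/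
def energyDensity : SmoothFn (ℝ × Eu n) :=
  timeDeriv z ^ 2 + ∑ i, spaceDeriv i z ^ 2 + (lift (bracketPow (-1)) * z) ^ 2

theorem multiplier_apply (p : ℝ × Eu n) :
    multiplier ε z p = radialCoef n ε p.2 * (∑ i, p.2 i * spaceDeriv i z p) +
      zeroOrderCoef n ε p.2 * z p - 2 * n * timeDeriv z p := by
  simp [multiplier]

theorem energyDensity_apply (p : ℝ × Eu n) :
    energyDensity z p = timeDeriv z p ^ 2 + ∑ i, spaceDeriv i z p ^ 2 +
      (bracketPow (-1) p.2 * z p) ^ 2 := by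
  simp [energyDensity]

theorem sum_deformation_mul_mul (v : Fin n → ℝ) (x : Eu n) :
    ∑ i, ∑ j, partialDeriv i (coord j * radialCoef n ε) x * v i * v j =
      radialCoef n ε x * ∑ i, v i ^ 2 + radialSlope n ε x * (∑ i, x i * v i) ^ 2 := by
  have entry (i j : Fin n) : partialDeriv i (coord j * radialCoef n ε) x * v i * v j =
      (if i = j then radialCoef n ε x * v i ^ 2 else 0) +
        radialSlope n ε x * ((x i * v i) * (x j * v j)) := by
    rw [partialDeriv_coord_mul_radialCoef, SmoothFn.add_apply]
    split_ifs with h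
    · subst h
      simp only [SmoothFn.mul_apply, coord_apply]
      ring
    · simp only [SmoothFn.mul_apply, coord_apply, SmoothFn.zero_apply]
      ring
  simp only [entry, Finset.sum_add_distrib, Finset.sum_ite_eq, Finset.mem_univ, if_true,
    ← Finset.mul_sum, pow_two (∑ i, x i * v i), Finset.sum_mul_sum]

theorem sum_partialDeriv_coord_mul_radialCoef (x : Eu n) :
    ∑ i, partialDeriv i (coord i * radialCoef n ε) x =
      2 * zeroOrderCoef n ε x + ε / 4 * (bracketPow (-1) x * bracketPow (-ε) x) := by
  simp only [partialDeriv_coord_mul_radialCoef, if_true, SmoothFn.add_apply, SmoothFn.mul_apply,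
    coord_apply, Finset.sum_add_distrib, ← Finset.sum_mul, ← sq (_ : ℝ),
    ← EuclideanSpace.real_norm_sq_eq, Finset.sum_const, Finset.card_univ, Fintype.card_fin,
    nsmul_eq_mul, zeroOrderCoef_apply]
  linear_combination radialCoef_add_norm_sq_mul_radialSlope (ε := ε) x

theorem divergence_morawetzCurrent (p : ℝ × Eu n) :
    divergence timeDeriv spaceDeriv (morawetzCurrent ε z) p =
      2 * multiplier ε z p * box z p
        - ε / 4 * (bracketPow (-1) p.2 * bracketPow (-ε) p.2) *
          (timeDeriv z p ^ 2 - ∑ i, spaceDeriv i z p ^ 2)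
        - 2 * (radialCoef n ε p.2 * ∑ i, spaceDeriv i z p ^ 2 +
          radialSlope n ε p.2 * (∑ i, p.2 i * spaceDeriv i z p) ^ 2)
        + (∑ i, partialDeriv i (partialDeriv i (zeroOrderCoef n ε))) p.2 * z p ^ 2 := by
  rw [morawetzCurrent, map_sub, map_add, map_smul,
    divergence_momentumCurrent (fun _ ↦ dirDeriv_comm _ _) (fun _ _ ↦ dirDeriv_comm _ _)
      (fun _ ↦ timeDeriv_lift _), divergence_zeroOrderCurrent (timeDeriv_lift _),
    divergence_energyCurrent (fun _ ↦ dirDeriv_comm _ _), multiplier_apply]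
  simp only [SmoothFn.add_apply, SmoothFn.sub_apply, SmoothFn.smul_apply, SmoothFn.mul_apply,
    SmoothFn.pow_apply, SmoothFn.sum_apply, SmoothFn.ofNat_apply, SmoothFn.zero_apply,
    SmoothFn.one_apply, Derivation.map_one_eq_zero, spaceDeriv_lift, lift_apply, coord_apply,
    mul_comm (_ : ℝ) (radialCoef n ε p.2), mul_assoc (radialCoef n ε p.2), ← Finset.mul_sum,
    sum_partialDeriv_coord_mul_radialCoef, sum_deformation_mul_mul, zero_mul,
    Finset.sum_const_zero]
  ring

section Bounds

variable {ε} (h₀ : 0 ≤ ε) (h₁ : ε ≤ 1) (p : ℝ × Eu n)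
include h₀

theorem sq_radialCoef_mul_sum_le (v : Fin n → ℝ) (x : Eu n) :
    (radialCoef n ε x * ∑ i, x i * v i) ^ 2 ≤ ∑ i, v i ^ 2 := by
  calc (radialCoef n ε x * ∑ i, x i * v i) ^ 2
      = radialCoef n ε x ^ 2 * (∑ i, x i * v i) ^ 2 := mul_pow ..
    _ ≤ radialCoef n ε x ^ 2 * (‖x‖ ^ 2 * ∑ i, v i ^ 2) := by
      gcongr
      exact sum_mul_sq_le_norm_sq_mul_sum_sq x v
    _ = (‖x‖ ^ 2 * radialCoef n ε x ^ 2) * ∑ i, v i ^ 2 := by ring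
    _ ≤ ∑ i, v i ^ 2 :=
      mul_le_of_le_one_left (by positivity) (norm_sq_mul_radialCoef_sq_le_one h₀ x)

include h₁

theorem sq_zeroOrderCoef_mul_le (hn : 1 ≤ n) (x : Eu n) (c : ℝ) :
    (zeroOrderCoef n ε x * c) ^ 2 ≤ n ^ 2 / 4 * (bracketPow (-1) x * c) ^ 2 := by
  have h := sq_le_sq' (neg_le_of_abs_le (abs_zeroOrderCoef_le h₀ h₁ x hn))
    (le_of_abs_le (abs_zeroOrderCoef_le h₀ h₁ x hn))
  nlinarith [mul_le_mul_of_nonneg_right h (sq_nonneg c)]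

theorem sq_multiplier_le (hn : 1 ≤ n) :
    multiplier ε z p ^ 2 ≤ 12 * n ^ 2 * energyDensity z p := by
  have hn' : (1 : ℝ) ≤ n ^ 2 := one_le_pow₀ (mod_cast hn)
  have radial := sq_radialCoef_mul_sum_le h₀ (fun i ↦ spaceDeriv i z p) p.2
  have zeroOrder := sq_zeroOrderCoef_mul_le h₀ h₁ hn p.2 (z p)
  have gradSq : 0 ≤ ∑ i, spaceDeriv i z p ^ 2 := by positivity
  rw [multiplier_apply, energyDensity_apply]
  set r := radialCoef n ε p.2 * ∑ i, p.2 i * spaceDeriv i z p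
  set q := zeroOrderCoef n ε p.2 * z p
  set τ := timeDeriv z p
  calc (r + q - 2 * n * τ) ^ 2
      ≤ 3 * (r ^ 2 + q ^ 2 + (2 * n * τ) ^ 2) := by
        nlinarith [sq_nonneg (r - q), sq_nonneg (r + 2 * n * τ), sq_nonneg (q + 2 * n * τ)]
    _ ≤ _ := by
      nlinarith [mul_le_mul_of_nonneg_right hn' gradSq,
        mul_nonneg (sq_nonneg (n : ℝ)) (sq_nonneg (bracketPow (-1) p.2 * z p))]

theorem morawetzCurrent_fst_le (hn : 1 ≤ n) :
    (morawetzCurrent ε z).1 p ≤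
      n / 4 * (bracketPow (-1) p.2 * z p) ^ 2 - n * ∑ i, spaceDeriv i z p ^ 2 := by
  have hn' : (1 : ℝ) ≤ n := mod_cast hn
  have radial := sq_radialCoef_mul_sum_le h₀ (fun i ↦ spaceDeriv i z p) p.2
  have zeroOrder := sq_zeroOrderCoef_mul_le h₀ h₁ hn p.2 (z p)
  have gradSq : 0 ≤ ∑ i, spaceDeriv i z p ^ 2 := by positivity
  have flux : (morawetzCurrent ε z).1 p =
      2 * timeDeriv z p * (radialCoef n ε p.2 * ∑ i, p.2 i * spaceDeriv i z p) +
        2 * timeDeriv z p * (zeroOrderCoef n ε p.2 * z p) -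
        2 * n * (timeDeriv z p ^ 2 + ∑ i, spaceDeriv i z p ^ 2) := by
    simp only [morawetzCurrent, momentumCurrent, zeroOrderCurrent, energyCurrent, Prod.fst_add,
      Prod.fst_sub, Prod.smul_fst, SmoothFn.add_apply, SmoothFn.sub_apply, SmoothFn.smul_apply,
      SmoothFn.mul_apply, SmoothFn.pow_apply, SmoothFn.sum_apply, SmoothFn.ofNat_apply,
      SmoothFn.one_apply, lift_apply, coord_apply, mul_comm (_ : ℝ) (radialCoef n ε p.2),
      mul_assoc (radialCoef n ε p.2), ← Finset.mul_sum]
    ring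
  rw [flux]
  set r := radialCoef n ε p.2 * ∑ i, p.2 i * spaceDeriv i z p
  set q := zeroOrderCoef n ε p.2 * z p
  set τ := timeDeriv z p
  have young : 2 * τ * q ≤ n * τ ^ 2 + n / 4 * (bracketPow (-1) p.2 * z p) ^ 2 := by
    refine le_of_mul_le_mul_left ?_ (zero_lt_one.trans_le hn')
    nlinarith [sq_nonneg (n * τ - q)]
  nlinarith [sq_nonneg (τ - r), mul_le_mul_of_nonneg_right hn' gradSq,
    mul_le_mul_of_nonneg_right hn' (sq_nonneg τ)]

theorem divergence_morawetzCurrent_le (hn : 3 ≤ n) :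
    divergence timeDeriv spaceDeriv (morawetzCurrent ε z) p ≤
      2 * multiplier ε z p * box z p
        - ε / 4 * (bracketPow (-(1 + ε)) p.2 * energyDensity z p) := by
  have slope := radialSlope_nonpos h₀ h₁ p.2
  have cauchy := sum_mul_sq_le_norm_sq_mul_sum_sq p.2 fun i ↦ spaceDeriv i z p
  have gradSq : 0 ≤ ∑ i, spaceDeriv i z p ^ 2 := by positivity
  have laplacian := laplacian_zeroOrderCoef_le h₀ h₁ p.2 hn
  have radial := radialCoef_add_norm_sq_mul_radialSlope (ε := ε) p.2
  have weight : bracketPow (-(1 + ε)) p.2 = bracketPow (-1) p.2 * bracketPow (-ε) p.2 := by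
    rw [neg_add, ← bracketPow_mul_bracketPow, SmoothFn.mul_apply]
  rw [divergence_morawetzCurrent, energyDensity_apply, weight]
  nlinarith [mul_le_mul_of_nonneg_right laplacian (sq_nonneg (z p)),
    mul_le_mul_of_nonpos_left cauchy slope, mul_nonneg (neg_nonneg.2 slope) gradSq,
    congrArg (· * ∑ i, spaceDeriv i z p ^ 2) radial]

end Bounds

theorem divergence_morawetzCurrent_le_sq_box (h₀ : 0 < ε) (h₁ : ε ≤ 1) (hn : 3 ≤ n)
    (p : ℝ × Eu n) :
    divergence timeDeriv spaceDeriv (morawetzCurrent ε z) p ≤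
      96 * n ^ 2 / ε * (bracketPow (1 + ε) p.2 * box z p ^ 2)
        - ε / 8 * (bracketPow (-(1 + ε)) p.2 * energyDensity z p) := by
  have : (0 : ℝ) < n := mod_cast (by omega : 0 < n)
  have w₀ := bracketPow_pos (-(1 + ε)) p.2
  have weight : bracketPow (1 + ε) p.2 * bracketPow (-(1 + ε)) p.2 = 1 :=
    bracketPow_mul_bracketPow_neg (1 + ε) p.2
  have mult := sq_multiplier_le z h₀.le h₁ p (by omega)
  have bound := divergence_morawetzCurrent_le z h₀.le h₁ p hn
  have absorb : ε / (96 * n ^ 2) * (12 * n ^ 2) = ε / 8 := by field_simp; norm_num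
  rw [← inv_div]
  set k := ε / (96 * n ^ 2)
  have k₀ : 0 < k := by positivity
  have young : 2 * multiplier ε z p * box z p ≤
      k * (bracketPow (-(1 + ε)) p.2 * multiplier ε z p ^ 2) +
        k⁻¹ * (bracketPow (1 + ε) p.2 * box z p ^ 2) := by
    rw [← sub_nonneg]
    calc 0 ≤ k * bracketPow (-(1 + ε)) p.2 *
          (multiplier ε z p - k⁻¹ * bracketPow (1 + ε) p.2 * box z p) ^ 2 := by positivity
      _ = _ := by
        field_simp
        linear_combination (bracketPow (1 + ε) p.2 * box z p ^ 2
          - 2 * k * multiplier ε z p * box z p) * weight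
  have split : k * (bracketPow (-(1 + ε)) p.2 * multiplier ε z p ^ 2) ≤
      ε / 8 * (bracketPow (-(1 + ε)) p.2 * energyDensity z p) := by
    rw [← absorb]
    nlinarith [mul_le_mul_of_nonneg_left mult (mul_pos k₀ w₀).le]
  linarith

variable {z} {T : ℝ}

theorem morawetzCurrent_mem {Ω : Set (ℝ × Eu n)} (hz : z ∈ testFn Ω) :
    morawetzCurrent ε z ∈ currentsIn (Fin n) (testFn Ω) :=
  sub_mem (add_mem
      (momentumCurrent_mem timeDeriv_mem_testFn spaceDeriv_mem_testFn hz _)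
      (zeroOrderCurrent_mem timeDeriv_mem_testFn spaceDeriv_mem_testFn hz _))
    (Submodule.smul_of_tower_mem _ _
      (energyCurrent_mem timeDeriv_mem_testFn spaceDeriv_mem_testFn hz _))

theorem energyDensity_mem_testFn {Ω : Set (ℝ × Eu n)} (hz : z ∈ testFn Ω) :
    energyDensity z ∈ testFn Ω := by
  refine add_mem (add_mem (Ideal.pow_mem_of_mem _ (timeDeriv_mem_testFn _ hz) 2 two_pos)
    (sum_mem fun i _ ↦ Ideal.pow_mem_of_mem _ (spaceDeriv_mem_testFn i _ hz) 2 two_pos))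
    (Ideal.pow_mem_of_mem _ (Ideal.mul_mem_left _ _ hz) 2 two_pos)

variable {ε}

theorem integral_morawetzCurrent_fst_nonpos (h₀ : 0 ≤ ε) (h₁ : ε ≤ 1) (hn : 3 ≤ n)
    {Ω : Set (ℝ × Eu n)} (hz : z ∈ testFn Ω) (t : ℝ) :
    ∫ x, (morawetzCurrent ε z).1 (t, x) ≤ 0 := by
  have hz' := slice_mem_testFn hz t
  have hardy := integral_bracketPow_mul_sq_le hn hz'
  have weighted := integrable_of_mem_testFn (μ := volume)
    (Ideal.pow_mem_of_mem _ (Ideal.mul_mem_left _ (bracketPow (-1)) hz') 2 two_pos)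
  have gradSq := integrable_of_mem_testFn (μ := volume) <| sum_mem fun i (_ : i ∈ Finset.univ) ↦
    Ideal.pow_mem_of_mem _ (dirDeriv_mem_testFn (EuclideanSpace.single i 1) hz') 2 two_pos
  have flux := integral_mono (integrable_of_mem_testFn
      (slice_mem_testFn (mem_currentsIn.1 (morawetzCurrent_mem ε hz)).1 t))
    ((weighted.const_mul (n / 4 : ℝ)).sub (gradSq.const_mul (n : ℝ)))
    fun x ↦ by
      simpa [partialDeriv_slice] using
        morawetzCurrent_fst_le z h₀ h₁ (t, x) (by omega)
  rw [integral_sub' (weighted.const_mul _) (gradSq.const_mul _), integral_const_mul,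
    integral_const_mul] at flux
  calc _ ≤ _ := flux
    _ = n / 4 * ((∫ x, ((bracketPow (-1) * slice t z) ^ 2 : SmoothFn (Eu n)) x) -
      4 * ∫ x, (∑ i, partialDeriv i (slice t z) ^ 2) x) := by ring
    _ ≤ 0 := mul_nonpos_of_nonneg_of_nonpos (by positivity) (sub_nonpos.2 hardy)

theorem setIntegral_slab_energyDensity_le (h₀ : 0 < ε) (h₁ : ε ≤ 1) (hn : 3 ≤ n) (hT : 0 ≤ T)
    (hz : z ∈ testFn {p : ℝ × Eu n | p.1 < T}) :
    ∫ p in slab n T, bracketPow (-(1 + ε)) p.2 * energyDensity z p ≤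
      768 * n ^ 2 / ε ^ 2 * ∫ p in slab n T, bracketPow (1 + ε) p.2 * box z p ^ 2 := by
  have energy : IntegrableOn (fun p ↦ bracketPow (-(1 + ε)) p.2 * energyDensity z p) (slab n T) :=
    (integrable_of_mem_testFn (Ideal.mul_mem_left _ (lift (bracketPow (-(1 + ε))))
      (energyDensity_mem_testFn hz))).integrableOn
  have forcing : IntegrableOn (fun p ↦ bracketPow (1 + ε) p.2 * box z p ^ 2) (slab n T) :=
    (integrable_of_mem_testFn (Ideal.mul_mem_left _ (lift (bracketPow (1 + ε)))
      (Ideal.pow_mem_of_mem _ (box_mem_testFn hz) 2 two_pos))).integrableOn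
  have current := morawetzCurrent_mem ε hz
  have bound := integral_mono
    (integrable_of_mem_testFn
      (divergence_mem timeDeriv_mem_testFn spaceDeriv_mem_testFn current)).integrableOn
    ((forcing.const_mul (96 * n ^ 2 / ε)).sub (energy.const_mul (ε / 8)))
    (divergence_morawetzCurrent_le_sq_box ε z h₀ h₁ hn)
  rw [setIntegral_slab_divergence hT current, integral_sub' (forcing.const_mul _)
    (energy.const_mul _), integral_const_mul, integral_const_mul] at bound
  have noFlux := integral_morawetzCurrent_fst_nonpos h₀.le h₁ hn hz 0
  have scaled : ε / 8 * ∫ p in slab n T, bracketPow (-(1 + ε)) p.2 * energyDensity z p ≤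
      96 * n ^ 2 / ε * ∫ p in slab n T, bracketPow (1 + ε) p.2 * box z p ^ 2 := by linarith
  calc _ = 8 / ε * (ε / 8 * ∫ p in slab n T, bracketPow (-(1 + ε)) p.2 * energyDensity z p) := by
        field_simp
    _ ≤ 8 / ε * (96 * n ^ 2 / ε * ∫ p in slab n T, bracketPow (1 + ε) p.2 * box z p ^ 2) := by
        gcongr
    _ = _ := by ring

end LocalEnergy

/-! ### Uniqueness of smooth solutions -/

section Uniqueness

variable {n : ℕ}

theorem integral_divergence_eq_zero {Ω : Set (ℝ × Eu n)}
    {J : SmoothFn (ℝ × Eu n) × (Fin n → SmoothFn (ℝ × Eu n))}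
    (hJ : J ∈ currentsIn (Fin n) (testFn Ω)) :
    ∫ p, divergence timeDeriv spaceDeriv J p = 0 := by
  obtain ⟨h₀, h⟩ := mem_currentsIn.1 hJ
  have int (i : Fin n) : Integrable (spaceDeriv i (J.2 i)) :=
    integrable_of_mem_testFn (dirDeriv_mem_testFn _ (h i))
  simp only [divergence_apply, SmoothFn.add_apply, SmoothFn.sum_apply]
  rw [integral_add (integrable_of_mem_testFn (dirDeriv_mem_testFn _ h₀))
      (integrable_finsetSum _ fun i _ ↦ int i),
    integral_finsetSum _ fun i _ ↦ int i, integral_dirDeriv_eq_zero volume h₀,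
    Finset.sum_eq_zero fun i _ ↦ integral_dirDeriv_eq_zero volume (h i) _, add_zero]

/-- The ideal of smooth functions on space-time that vanish before the time `t₀`. -/
def vanishingBefore (t₀ : ℝ) : Ideal (SmoothFn (ℝ × Eu n)) where
  carrier := {f | ∀ p, p.1 < t₀ → f p = 0}
  zero_mem' _ _ := rfl
  add_mem' hf hg p hp := by simp [hf p hp, hg p hp]
  smul_mem' c f hf p hp := by simp [hf p hp]

theorem dirDeriv_mem_vanishingBefore {t₀ : ℝ} (v : ℝ × Eu n) {f : SmoothFn (ℝ × Eu n)}
    (hf : f ∈ vanishingBefore t₀) : dirDeriv v f ∈ vanishingBefore t₀ := fun p hp ↦ by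
  have near : f =ᶠ[nhds p] fun _ ↦ 0 :=
    ((isOpen_Iio.preimage continuous_fst).eventually_mem hp).mono hf
  simp [dirDeriv_apply, near.fderiv_eq]

/-- The time coordinate `t`. -/
def timeCoord : SmoothFn (ℝ × Eu n) := .mk Prod.fst contDiff_fst

theorem dirDeriv_timeCoord_apply (v p : ℝ × Eu n) : dirDeriv v timeCoord p = v.1 :=
  DFunLike.congr_fun (hasFDerivAt_fst (p := p)).fderiv v

section Cutoff

variable {E : Type*} [NormedAddCommGroup E] [NormedSpace ℝ E]

/-- The composition of the smooth cutoff `s ↦ exp (-1/s)`, `s > 0`, with `S`. -/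
def cutoff (S : SmoothFn E) : SmoothFn E :=
  .mk (fun p ↦ expNegInvGlue (S p)) (expNegInvGlue.contDiff.comp S.contDiff)

theorem cutoff_apply_eq_zero {S : SmoothFn E} {p : E} (h : S p ≤ 0) : cutoff S p = 0 :=
  expNegInvGlue.zero_of_nonpos h

/-- The factor `(d/ds) exp (-1/s)` at `s = S p` in the chain rule for `cutoff S`. -/
def cutoffSlope (S : SmoothFn E) (p : E) : ℝ := (S p)⁻¹ ^ 2 * cutoff S p

theorem cutoffSlope_nonneg (S : SmoothFn E) (p : E) : 0 ≤ cutoffSlope S p :=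
  mul_nonneg (sq_nonneg _) (expNegInvGlue.nonneg _)

theorem cutoffSlope_pos {S : SmoothFn E} {p : E} (h : 0 < S p) : 0 < cutoffSlope S p :=
  mul_pos (by positivity) (expNegInvGlue.pos_of_pos h)

theorem dirDeriv_cutoff_apply (S : SmoothFn E) (v p : E) :
    dirDeriv v (cutoff S) p = cutoffSlope S p * dirDeriv v S p := by
  have outer : HasDerivAt expNegInvGlue ((S p)⁻¹ ^ 2 * expNegInvGlue (S p)) (S p) := by
    simpa using expNegInvGlue.hasDerivAt_polynomial_eval_inv_mul 1 (S p)
  have comp := outer.comp_hasFDerivAt p (S.differentiable p).hasFDerivAt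
  exact DFunLike.congr_fun comp.fderiv v

end Cutoff

variable (lam T : ℝ)

/-- The function `λ (T - t) - ⟨x⟩`, which is positive inside a backward cone. -/
def coneFn : SmoothFn (ℝ × Eu n) :=
  algebraMap ℝ _ (lam * T) - lam • timeCoord - lift (bracketPow 1)

theorem coneFn_apply (p : ℝ × Eu n) : coneFn lam T p = lam * (T - p.1) - jap p.2 := by
  change lam * T - lam * p.1 - bracketPow 1 p.2 = _
  rw [bracketPow_apply, rpow_one, mul_sub]

theorem timeDeriv_coneFn (p : ℝ × Eu n) : timeDeriv (coneFn lam T) p = -lam := by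
  simp [coneFn, dirDeriv_timeCoord_apply]

theorem spaceDeriv_coneFn (i : Fin n) (p : ℝ × Eu n) :
    spaceDeriv i (coneFn lam T) p = -(bracketPow (-1) p.2 * p.2 i) := by
  have h : (1 : ℝ) - 2 = -1 := by norm_num
  simp [coneFn, dirDeriv_timeCoord_apply, partialDeriv_bracketPow, h, mul_comm]

variable {lam T} {t₀ : ℝ} {u : SmoothFn (ℝ × Eu n)}

theorem cutoff_coneFn_mul_mem_testFn (hlam : 0 ≤ lam) {f : SmoothFn (ℝ × Eu n)}
    (hf : f ∈ vanishingBefore t₀) : cutoff (coneFn lam T) * f ∈ testFn univ := by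
  refine ⟨HasCompactSupport.intro (K := Icc t₀ T ×ˢ Metric.closedBall 0 (lam * (T - t₀)))
    (isCompact_Icc.prod (isCompact_closedBall _ _)) fun p hp ↦ ?_, subset_univ _⟩
  rcases lt_or_ge p.1 t₀ with past | future
  · exact mul_eq_zero_of_right _ (hf p past)
  · refine mul_eq_zero_of_left (cutoff_apply_eq_zero (le_of_not_gt fun inside ↦ hp ?_)) _
    rw [coneFn_apply] at inside
    have time : p.1 ≤ T := by
      by_contra! late
      nlinarith [jap_pos p.2]
    have space : ‖p.2‖ ≤ jap p.2 := le_sqrt_of_sq_le (by linarith)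
    have slope : lam * (T - p.1) ≤ lam * (T - t₀) := by gcongr
    exact ⟨⟨future, time⟩, mem_closedBall_zero_iff.2 (by linarith)⟩

theorem energyCurrent_cutoff_coneFn_mem (hlam : 0 ≤ lam) (hu : u ∈ vanishingBefore t₀) :
    energyCurrent timeDeriv spaceDeriv (cutoff (coneFn lam T)) u ∈
      currentsIn (Fin n) (testFn univ) := by
  obtain ⟨h₀, h⟩ := mem_currentsIn.1 (energyCurrent_mem
    (fun f ↦ dirDeriv_mem_vanishingBefore (1, 0))
    (fun i f ↦ dirDeriv_mem_vanishingBefore (0, EuclideanSpace.single i 1)) hu 1)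
  have scaled : energyCurrent timeDeriv spaceDeriv (cutoff (coneFn lam T)) u =
      (cutoff (coneFn lam T) : SmoothFn (ℝ × Eu n)) • energyCurrent timeDeriv spaceDeriv 1 u := by
    exact Prod.ext (by simp [energyCurrent]) <| by
      ext1
      simp [energyCurrent, mul_assoc, mul_left_comm]
  rw [scaled]
  exact mem_currentsIn.2 ⟨cutoff_coneFn_mul_mem_testFn hlam h₀,
    fun i ↦ cutoff_coneFn_mul_mem_testFn hlam (h i)⟩

theorem cutoff_coneFn_mul_box_eq_zero (hlam : 0 ≤ lam)
    (hbox : ∀ p : ℝ × Eu n, p.1 < T → box u p = 0) (p : ℝ × Eu n) :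
    cutoff (coneFn lam T) p * box u p = 0 := by
  rcases lt_or_ge p.1 T with before | after
  · rw [hbox p before, mul_zero]
  · refine mul_eq_zero_of_left (cutoff_apply_eq_zero ?_) _
    rw [coneFn_apply]
    nlinarith [jap_pos p.2]

theorem bracketPow_neg_one_mul_sum_sq_le (x : Eu n) (v : Fin n → ℝ) :
    (bracketPow (-1) x * ∑ i, x i * v i) ^ 2 ≤ ∑ i, v i ^ 2 :=
  calc _ = bracketPow (-1) x ^ 2 * (∑ i, x i * v i) ^ 2 := mul_pow _ _ _
    _ ≤ bracketPow (-1) x ^ 2 * (‖x‖ ^ 2 * ∑ i, v i ^ 2) := by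
      gcongr
      exact sum_mul_sq_le_norm_sq_mul_sum_sq _ _
    _ = ‖x‖ ^ 2 * bracketPow (-1) x ^ 2 * ∑ i, v i ^ 2 := by ring
    _ ≤ _ := mul_le_of_le_one_left (by positivity) (norm_sq_mul_bracketPow_neg_one_sq_le_one x)

/-- The cone is spacelike as soon as its slope exceeds the speed of propagation. -/
theorem divergence_energyCurrent_cutoff_coneFn_le (hlam : 1 ≤ lam)
    (hbox : ∀ p : ℝ × Eu n, p.1 < T → box u p = 0) (p : ℝ × Eu n) :
    divergence timeDeriv spaceDeriv (energyCurrent timeDeriv spaceDeriv (cutoff (coneFn lam T)) u) p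
      ≤ -((lam - 1) * cutoffSlope (coneFn lam T) p * timeDeriv u p ^ 2) := by
  set g := cutoffSlope (coneFn lam T) p
  set r := bracketPow (-1) p.2 * ∑ i, p.2 i * spaceDeriv i u p
  have cross : ∑ i, spaceDeriv i (cutoff (coneFn lam T)) p * spaceDeriv i u p = -(g * r) := by
    simp only [g, r, dirDeriv_cutoff_apply, spaceDeriv_coneFn, Finset.mul_sum,
      ← Finset.sum_neg_distrib]
    exact Finset.sum_congr rfl fun i _ ↦ by ring
  have radial : r ^ 2 ≤ ∑ i, spaceDeriv i u p ^ 2 := bracketPow_neg_one_mul_sum_sq_le _ _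
  have coercive : 0 ≤ g * (lam * ∑ i, spaceDeriv i u p ^ 2 + timeDeriv u p ^ 2
      - 2 * timeDeriv u p * r) :=
    mul_nonneg (cutoffSlope_nonneg _ _) (by nlinarith [sq_nonneg (timeDeriv u p - r)])
  have noForcing := cutoff_coneFn_mul_box_eq_zero (zero_le_one.trans hlam) hbox p
  rw [divergence_energyCurrent fun i f ↦ dirDeriv_comm _ _ f]
  simp only [SmoothFn.add_apply, SmoothFn.sub_apply, SmoothFn.mul_apply, SmoothFn.pow_apply,
    SmoothFn.sum_apply, SmoothFn.ofNat_apply, cross, dirDeriv_cutoff_apply (coneFn lam T) (1, 0),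
    timeDeriv_coneFn]
  linear_combination coercive + 2 * timeDeriv u p * noForcing

theorem timeDeriv_eq_zero_of_box_eq_zero (hu : u ∈ vanishingBefore t₀)
    (hbox : ∀ p : ℝ × Eu n, p.1 < T → box u p = 0) {p : ℝ × Eu n} (hp : p.1 < T) :
    timeDeriv u p = 0 := by
  have remaining : 0 < T - p.1 := sub_pos.2 hp
  set lam := 1 + jap p.2 / (T - p.1) with slope
  have steep : 0 < lam - 1 := by
    rw [slope, add_sub_cancel_left]
    exact div_pos (jap_pos _) remaining
  have inside : 0 < coneFn lam T p := by
    rw [coneFn_apply, slope, add_mul, div_mul_cancel₀ _ remaining.ne']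
    linarith
  set J := energyCurrent timeDeriv spaceDeriv (cutoff (coneFn lam T)) u
  have hJ : J ∈ currentsIn (Fin n) (testFn univ) :=
    energyCurrent_cutoff_coneFn_mem (by linarith) hu
  have decay := divergence_energyCurrent_cutoff_coneFn_le (by linarith : 1 ≤ lam) hbox
  have nonneg (q : ℝ × Eu n) : 0 ≤ (-divergence timeDeriv spaceDeriv J) q :=
    neg_nonneg.2 <| (decay q).trans <| neg_nonpos.2 <|
      mul_nonneg (mul_nonneg steep.le (cutoffSlope_nonneg _ q)) (sq_nonneg _)
  have divZero : ⇑(-divergence timeDeriv spaceDeriv J) = fun _ ↦ 0 := by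
    refine (Continuous.ae_eq_iff_eq volume (SmoothFn.continuous _) continuous_const).1 <|
      (integral_eq_zero_iff_of_nonneg nonneg (integrable_of_mem_testFn (neg_mem <|
        divergence_mem timeDeriv_mem_testFn spaceDeriv_mem_testFn hJ))).1 ?_
    simp only [SmoothFn.neg_apply, integral_neg, integral_divergence_eq_zero hJ, neg_zero]
  have positive : 0 < (lam - 1) * cutoffSlope (coneFn lam T) p :=
    mul_pos steep (cutoffSlope_pos inside)
  have flux : divergence timeDeriv spaceDeriv J p = 0 := neg_eq_zero.1 (congrFun divZero p)
  have square : timeDeriv u p ^ 2 ≤ 0 := by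
    by_contra! h
    linarith [decay p, mul_pos positive h]
  exact pow_eq_zero_iff two_ne_zero |>.1 (square.antisymm (sq_nonneg _))

theorem eq_zero_of_box_eq_zero (hu : u ∈ vanishingBefore t₀)
    (hbox : ∀ p : ℝ × Eu n, p.1 < T → box u p = 0) {p : ℝ × Eu n} (hp : p.1 < T) : u p = 0 := by
  obtain ⟨t, x⟩ := p
  have past : t ⊓ (t₀ - 1) < t₀ := (inf_le_right).trans_lt (sub_one_lt t₀)
  have ftc := intervalIntegral.integral_eq_sub_of_hasDerivAt (a := t ⊓ (t₀ - 1)) (b := t)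
    (fun s _ ↦ hasDerivAt_time u s x)
    (((timeDeriv u).continuous.comp (by fun_prop)).intervalIntegrable _ _)
  have static : ∫ s in t ⊓ (t₀ - 1)..t, timeDeriv u (s, x) = 0 := by
    refine (intervalIntegral.integral_congr fun s hs ↦ ?_).trans intervalIntegral.integral_zero
    rw [uIcc_of_le inf_le_left] at hs
    exact timeDeriv_eq_zero_of_box_eq_zero hu hbox (hs.2.trans_lt hp)
  rw [static, hu (t ⊓ (t₀ - 1), x) past, sub_zero] at ftc
  exact ftc.symm

end Uniqueness

/-! ### Uniqueness of weak solutions -/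

section Mollification

variable {E : Type*} [NormedAddCommGroup E] [NormedSpace ℝ E]

/-- The reflection `y ↦ φ (p - y)`. -/
def reflection (p : E) : SmoothFn E →ₐ[ℝ] SmoothFn E :=
  affineComp (ContinuousAffineMap.const ℝ E p - ContinuousAffineMap.id ℝ E)

@[simp]
theorem reflection_apply (p : E) (φ : SmoothFn E) (y : E) : reflection p φ y = φ (p - y) := rfl

theorem dirDeriv_reflection (v p : E) (φ : SmoothFn E) :
    dirDeriv v (reflection p φ) = -reflection p (dirDeriv v φ) := by
  have linear : (ContinuousAffineMap.const ℝ E p - ContinuousAffineMap.id ℝ E).contLinear v = -v :=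
    zero_sub v
  rw [reflection, dirDeriv_affineComp, linear, dirDeriv_neg, map_neg]

variable [MeasurableSpace E] [BorelSpace E] {μ : Measure E}
  {h : E → ℝ} (hh : LocallyIntegrable h μ) {Ω : Set E} {φ : SmoothFn E} (hφ : φ ∈ testFn Ω)

open scoped Convolution

/-- The convolution of a locally integrable function with a test function. -/
def mollify : SmoothFn E :=
  .mk (h ⋆[(ContinuousLinearMap.lsmul ℝ ℝ).flip, μ] φ)
    (hφ.1.contDiff_convolution_right _ hh φ.contDiff)

theorem mollify_apply (p : E) : mollify hh hφ p = ∫ y, φ (p - y) * h y ∂μ := rfl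

include hh hφ in
theorem integrable_mollify (p : E) : Integrable (fun y ↦ φ (p - y) * h y) μ :=
  hφ.1.convolutionExists_right (ContinuousLinearMap.lsmul ℝ ℝ).flip hh φ.continuous p

theorem dirDeriv_mollify [SFinite μ] [μ.IsAddLeftInvariant] (v : E) :
    dirDeriv v (mollify hh hφ) = mollify hh (dirDeriv_mem_testFn v hφ) := by
  ext p
  have deriv := hφ.1.hasFDerivAt_convolution_right (ContinuousLinearMap.lsmul ℝ ℝ).flip hh
    (φ.contDiff.of_le (mod_cast le_top)) p
  rw [dirDeriv_apply, show fderiv ℝ (mollify hh hφ) p = _ from deriv.fderiv,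
    convolution_precompR_apply _ hh (hφ.1.fderiv ℝ) φ.contDiff_fderiv.continuous]
  rfl

end Mollification

section WeakUniqueness

variable {n : ℕ}

theorem box_reflection (p : ℝ × Eu n) (φ : SmoothFn (ℝ × Eu n)) :
    box (reflection p φ) = reflection p (box φ) := by
  simp [waveOp_apply, dirDeriv_reflection]

theorem box_mollify {h : ℝ × Eu n → ℝ} (hh : LocallyIntegrable h) {Ω : Set (ℝ × Eu n)}
    {φ : SmoothFn (ℝ × Eu n)} (hφ : φ ∈ testFn Ω) :
    box (mollify hh hφ) = mollify hh (box_mem_testFn hφ) := by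
  ext p
  have int (v : ℝ × Eu n) :=
    integrable_mollify hh (dirDeriv_mem_testFn v (dirDeriv_mem_testFn v hφ)) p
  simp only [waveOp_apply, dirDeriv_mollify, SmoothFn.sub_apply, SmoothFn.sum_apply, mollify_apply,
    sub_mul, Finset.sum_mul]
  rw [integral_sub (int _) (integrable_finsetSum _ fun i _ ↦ int _),
    integral_finsetSum _ fun i _ ↦ int _]

theorem box_mollify_apply {h : ℝ × Eu n → ℝ} (hh : LocallyIntegrable h) {Ω : Set (ℝ × Eu n)}
    {φ : SmoothFn (ℝ × Eu n)} (hφ : φ ∈ testFn Ω) (p : ℝ × Eu n) :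
    box (mollify hh hφ) p = ∫ y, h y * box (reflection p φ) y := by
  simp only [box_mollify, mollify_apply, box_reflection, reflection_apply, mul_comm]

theorem reflection_mem_testFn {p : ℝ × Eu n} {r T : ℝ} {φ : SmoothFn (ℝ × Eu n)}
    (hφ : φ ∈ testFn (Metric.closedBall 0 r)) (hp : p.1 + r < T) :
    reflection p φ ∈ testFn {q : ℝ × Eu n | q.1 < T} := by
  have inBall : Function.support (reflection p φ) ⊆ Metric.closedBall p r := fun y hy ↦ by
    simpa [dist_eq_norm, norm_sub_rev] using hφ.2 (subset_tsupport _ hy)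
  have tsupp := closure_minimal inBall Metric.isClosed_closedBall
  refine ⟨(isCompact_closedBall p r).of_isClosed_subset (isClosed_tsupport _) tsupp, fun y hy ↦ ?_⟩
  have time := (abs_le.1 ((norm_fst_le (y - p)).trans (mem_closedBall_iff_norm.1 (tsupp hy)))).2
  rw [Prod.fst_sub] at time
  exact (sub_le_iff_le_add'.1 time).trans_lt hp

theorem mollify_eq_zero {T : ℝ} {h : ℝ × Eu n → ℝ} (hh : LocallyIntegrable h)
    (h₀ : ∀ p : ℝ × Eu n, p.1 < 0 → h p = 0)
    (hbox : ∀ z ∈ testFn {p : ℝ × Eu n | p.1 < T}, ∫ p, h p * box z p = 0)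
    {r : ℝ} {φ : SmoothFn (ℝ × Eu n)} (hφ : φ ∈ testFn (Metric.closedBall 0 r))
    {p : ℝ × Eu n} (hp : p.1 < T - r) : mollify hh hφ p = 0 := by
  refine eq_zero_of_box_eq_zero (t₀ := -r) (fun q hq ↦ ?_) (fun q hq ↦ ?_) hp
  · refine integral_eq_zero_of_ae (.of_forall fun y ↦ ?_)
    rcases lt_or_ge y.1 0 with past | future
    · exact mul_eq_zero_of_right _ (h₀ y past)
    · refine mul_eq_zero_of_left (image_eq_zero_of_notMem_tsupport fun hy ↦ ?_) _
      have time := (abs_le.1 ((norm_fst_le _).trans (mem_closedBall_zero_iff.1 (hφ.2 hy)))).1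
      rw [Prod.fst_sub] at time
      linarith
  · rw [box_mollify_apply]
    exact hbox _ (reflection_mem_testFn hφ (lt_sub_iff_add_lt.1 hq))

theorem normed_mem_testFn {E : Type*} [NormedAddCommGroup E] [NormedSpace ℝ E]
    [FiniteDimensional ℝ E] [MeasurableSpace E] [BorelSpace E] (μ : Measure E) [μ.IsAddHaarMeasure]
    (χ : ContDiffBump (0 : E)) :
    SmoothFn.mk (χ.normed μ) χ.contDiff_normed ∈ testFn (Metric.closedBall 0 χ.rOut) :=
  ⟨χ.hasCompactSupport_normed, (χ.tsupport_normed_eq (μ := μ)).subset⟩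

theorem ae_eq_zero_of_weak_box_eq_zero {T : ℝ} {h : ℝ × Eu n → ℝ} (hh : LocallyIntegrable h)
    (h₀ : ∀ p : ℝ × Eu n, p.1 < 0 → h p = 0)
    (hbox : ∀ z ∈ testFn {p : ℝ × Eu n | p.1 < T}, ∫ p, h p * box z p = 0) :
    ∀ᵐ p : ℝ × Eu n, p.1 < T → h p = 0 := by
  let χ (k : ℕ) : ContDiffBump (0 : ℝ × Eu n) :=
    ⟨1 / ((k : ℝ) + 1) / 2, 1 / ((k : ℝ) + 1), by positivity, half_lt_self (by positivity)⟩
  have radius : Filter.Tendsto (fun k ↦ (χ k).rOut) Filter.atTop (nhds 0) :=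
    tendsto_one_div_add_atTop_nhds_zero_nat
  have approx := ContDiffBump.ae_convolution_tendsto_right_of_locallyIntegrable (μ := volume)
    (K := 2) radius (.of_forall fun k ↦ (mul_div_cancel₀ _ two_ne_zero).ge) hh
  filter_upwards [approx] with p limit hp
  refine tendsto_nhds_unique limit (tendsto_const_nhds.congr' ?_)
  filter_upwards [radius.eventually_lt_const (sub_pos.2 hp)] with k small
  rw [← mollify_eq_zero hh h₀ hbox (normed_mem_testFn volume (χ k)) (lt_sub_comm.1 small),
    ← convolution_flip]
  rfl

end WeakUniqueness

section WeakUniquenessOnSlab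

variable {n : ℕ} {T : ℝ}

theorem ae_slab_eq_zero_of_weak_box_eq_zero {f : ℝ × Eu n → ℝ}
    (hf : LocallyIntegrable f (volume.restrict (slab n T)))
    (hbox : ∀ z ∈ testFn {p : ℝ × Eu n | p.1 < T}, ∫ p in slab n T, f p * box z p = 0) :
    f =ᵐ[volume.restrict (slab n T)] 0 := by
  have extended : LocallyIntegrable ((slab n T).indicator f) := by
    rw [locallyIntegrable_iff] at hf ⊢
    intro K hK
    rw [IntegrableOn, integrable_indicator_iff (measurableSet_slab T), IntegrableOn,
      Measure.restrict_comm (measurableSet_slab T)]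
    exact hf K hK
  have vanishing := ae_eq_zero_of_weak_box_eq_zero (T := T) extended
    (fun p hp ↦ indicator_of_notMem (fun h ↦ hp.not_ge h.1.1) f) fun z hz ↦ by
      simpa only [← indicator_mul_left, integral_indicator (measurableSet_slab T)] using hbox z hz
  have terminalNull : ∀ᵐ p : ℝ × Eu n, p.1 ≠ T :=
    Measure.quasiMeasurePreserving_fst.ae (p := (· ≠ T)) (by simp [ae_iff])
  filter_upwards [ae_restrict_of_ae vanishing, ae_restrict_of_ae terminalNull,
    ae_restrict_mem (measurableSet_slab T)] with p zero interior hp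
  rw [← indicator_of_mem hp f, zero (lt_of_le_of_ne hp.1.2 interior), Pi.zero_apply]

theorem setIntegral_slab_mul_box (hT : 0 ≤ T) {w z : SmoothFn (ℝ × Eu n)}
    (hw₀ : ∀ x, w (0, x) = 0) (hw₁ : ∀ x, timeDeriv w (0, x) = 0)
    (hz : z ∈ testFn {p : ℝ × Eu n | p.1 < T}) :
    ∫ p in slab n T, w p * box z p = ∫ p in slab n T, box w p * z p := by
  have int₁ : Integrable (fun p ↦ w p * box z p) :=
    integrable_of_mem_testFn (Ideal.mul_mem_left _ w (box_mem_testFn hz))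
  have int₂ : Integrable (fun p ↦ box w p * z p) :=
    integrable_of_mem_testFn (Ideal.mul_mem_left _ (box w) hz)
  have green := setIntegral_slab_divergence hT
    (greenCurrent_mem timeDeriv_mem_testFn spaceDeriv_mem_testFn hz w)
  simp only [divergence_greenCurrent] at green
  simp only [greenCurrent, SmoothFn.sub_apply, SmoothFn.mul_apply, hw₀,
    hw₁, zero_mul, mul_zero, sub_zero, integral_zero, neg_zero, mul_comm (z _) (box w _)] at green
  rwa [integral_sub int₁.integrableOn int₂.integrableOn, sub_eq_zero] at green

end WeakUniquenessOnSlab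

/-! ### Duality -/

section Duality

theorem exists_inner_eq_of_abs_le_mul_norm {Z H : Type*} [AddCommGroup Z] [Module ℝ Z]
    [NormedAddCommGroup H] [InnerProductSpace ℝ H] [CompleteSpace H] (A : Z →ₗ[ℝ] H)
    (l : Z →ₗ[ℝ] ℝ) {c : ℝ} (hc : 0 ≤ c) (hl : ∀ z, |l z| ≤ c * ‖A z‖) :
    ∃ y : H, ‖y‖ ≤ c ∧ ∀ z, inner ℝ y (A z) = l z := by
  obtain ⟨s, hs⟩ := A.rangeRestrict.exists_rightInverse_of_surjective
    (LinearMap.range_eq_top.2 A.surjective_rangeRestrict)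
  have section_apply (y : LinearMap.range A) : A (s y) = y :=
    congrArg Subtype.val (LinearMap.congr_fun hs y)
  have factor (z : Z) : l (s ⟨A z, z, rfl⟩) = l z := by
    have bound := hl (s ⟨A z, z, rfl⟩ - z)
    rw [map_sub A, section_apply, sub_self, norm_zero, mul_zero, map_sub] at bound
    exact sub_eq_zero.1 (abs_nonpos_iff.1 bound)
  have bounded (y : LinearMap.range A) : ‖(l ∘ₗ s) y‖ ≤ c * ‖y‖ :=
    (hl (s y)).trans_eq (by rw [section_apply, Submodule.coe_norm])
  obtain ⟨g, extends_, norm_eq⟩ :=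
    exists_extension_norm_eq (LinearMap.range A) ((l ∘ₗ s).mkContinuous c bounded)
  refine ⟨(InnerProductSpace.toDual ℝ H).symm g, ?_, fun z ↦ ?_⟩
  · rw [LinearIsometryEquiv.norm_map, norm_eq]
    exact LinearMap.mkContinuous_norm_le _ hc bounded
  · rw [InnerProductSpace.toDual_symm_apply, ← factor]
    exact extends_ ⟨A z, z, rfl⟩

variable {E : Type*} [NormedAddCommGroup E] [NormedSpace ℝ E] [MeasurableSpace E] [BorelSpace E]
  {Ω : Set E} {f : SmoothFn E}

theorem memLp_of_mem_testFn {μ : Measure E} [IsFiniteMeasureOnCompacts μ] (hf : f ∈ testFn Ω) :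
    MemLp f 2 μ :=
  f.continuous.memLp_of_hasCompactSupport hf.1

/-- The embedding of test functions into `L²`. -/
def testFnToL2 (Ω : Set E) (μ : Measure E) [IsFiniteMeasureOnCompacts μ] :
    testFn Ω →ₗ[ℝ] Lp ℝ 2 μ where
  toFun f := (memLp_of_mem_testFn f.2).toLp f
  map_add' f g := MemLp.toLp_add (memLp_of_mem_testFn f.2) (memLp_of_mem_testFn g.2)
  map_smul' c f := MemLp.toLp_const_smul c (memLp_of_mem_testFn f.2)

variable {μ : Measure E} [IsFiniteMeasureOnCompacts μ]

theorem inner_testFnToL2 (y : Lp ℝ 2 μ) (f : testFn Ω) :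
    inner ℝ y (testFnToL2 Ω μ f) = ∫ p, y p * f.1 p ∂μ := by
  rw [L2.inner_def]
  refine integral_congr_ae ?_
  filter_upwards [(memLp_of_mem_testFn f.2).coeFn_toLp (μ := μ)] with p hp
  change inner ℝ (y p) ((memLp_of_mem_testFn f.2).toLp f p) = _
  rw [hp]
  exact mul_comm _ _

theorem norm_testFnToL2_sq (f : testFn Ω) : ‖testFnToL2 Ω μ f‖ ^ 2 = ∫ p, f.1 p ^ 2 ∂μ := by
  rw [← real_inner_self_eq_norm_sq, inner_testFnToL2]
  refine integral_congr_ae ?_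
  filter_upwards [(memLp_of_mem_testFn f.2).coeFn_toLp (μ := μ)] with p hp
  rw [show testFnToL2 Ω μ f p = f.1 p from hp, sq]

end Duality

section DualEstimate

variable {n : ℕ} {T ε : ℝ}

/-- The d'Alembertian on test functions. -/
def boxTestFn (Ω : Set (ℝ × Eu n)) : testFn Ω →ₗ[ℝ] testFn Ω :=
  LinearMap.restrict (p := (testFn Ω).restrictScalars ℝ) (q := (testFn Ω).restrictScalars ℝ)
    box fun _ ↦ box_mem_testFn

variable (n T) in
/-- The map `z ↦ ⟨x⟩ᵃ z` from test functions vanishing near `t = T` to `L²` of the slab. -/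
def weightedL2 (a : ℝ) :
    testFn {p : ℝ × Eu n | p.1 < T} →ₗ[ℝ] Lp ℝ 2 (volume.restrict (slab n T)) :=
  testFnToL2 _ _ ∘ₗ DistribSMul.toLinearMap ℝ _ (lift (bracketPow a : SmoothFn (Eu n)))

theorem inner_weightedL2 (a : ℝ) (y : Lp ℝ 2 (volume.restrict (slab n T)))
    (z : testFn {p : ℝ × Eu n | p.1 < T}) :
    inner ℝ y (weightedL2 n T a z) = ∫ p in slab n T, y p * (bracketPow a p.2 * z.1 p) :=
  inner_testFnToL2 y (lift (bracketPow a : SmoothFn (Eu n)) • z)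

theorem norm_weightedL2_sq (a : ℝ) (z : testFn {p : ℝ × Eu n | p.1 < T}) :
    ‖weightedL2 n T a z‖ ^ 2 = ∫ p in slab n T, bracketPow (2 * a) p.2 * z.1 p ^ 2 := by
  refine (norm_testFnToL2_sq (lift (bracketPow a : SmoothFn (Eu n)) • z)).trans
    (integral_congr_ae (.of_forall fun p ↦ ?_))
  have square : bracketPow a p.2 ^ 2 = bracketPow (2 * a) p.2 := by
    simpa using congr($(bracketPow_pow a 2) p.2)
  exact (mul_pow (bracketPow a p.2) (z.1 p) 2).trans (by rw [square])

theorem setIntegral_slab_bracketPow_mul_sq_le (h₀ : 0 < ε) (h₁ : ε ≤ 1) (hn : 3 ≤ n)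
    (hT : 0 ≤ T) {z : SmoothFn (ℝ × Eu n)} (hz : z ∈ testFn {p : ℝ × Eu n | p.1 < T}) :
    ∫ p in slab n T, bracketPow (-(3 + ε)) p.2 * z p ^ 2 ≤
      768 * n ^ 2 / ε ^ 2 * ∫ p in slab n T, bracketPow (1 + ε) p.2 * box z p ^ 2 := by
  refine le_trans (integral_mono ?_ ?_ fun p ↦ ?_)
    (setIntegral_slab_energyDensity_le h₀ h₁ hn hT hz)
  · exact (integrable_of_mem_testFn (Ideal.mul_mem_left _ (lift (bracketPow (-(3 + ε))))
      (Ideal.pow_mem_of_mem _ hz 2 two_pos))).integrableOn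
  · exact (integrable_of_mem_testFn (Ideal.mul_mem_left _ (lift (bracketPow (-(1 + ε))))
      (energyDensity_mem_testFn hz))).integrableOn
  have weight :
      bracketPow (-(3 + ε)) p.2 = bracketPow (-(1 + ε)) p.2 * bracketPow (-1) p.2 ^ 2 := by
    rw [← SmoothFn.pow_apply, bracketPow_pow, ← SmoothFn.mul_apply, bracketPow_mul_bracketPow]
    congr 2
    push_cast
    ring
  have := (bracketPow_pos (-(1 + ε)) p.2).le
  rw [weight, mul_assoc, ← mul_pow, energyDensity_apply]
  gcongr
  exact le_add_of_nonneg_left (by positivity)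

theorem norm_weightedL2_le_norm_weightedL2_box (h₀ : 0 < ε) (h₁ : ε ≤ 1) (hn : 3 ≤ n)
    (hT : 0 ≤ T) (z : testFn {p : ℝ × Eu n | p.1 < T}) :
    ‖weightedL2 n T (-((3 + ε) / 2)) z‖ ≤
      28 * n / ε * ‖weightedL2 n T ((1 + ε) / 2) (boxTestFn _ z)‖ := by
  have lhs : 2 * -((3 + ε) / 2) = -(3 + ε) := by ring
  have rhs : 2 * ((1 + ε) / 2) = 1 + ε := by ring
  refine le_of_sq_le_sq ?_ (by positivity)
  calc ‖weightedL2 n T (-((3 + ε) / 2)) z‖ ^ 2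
      ≤ 768 * n ^ 2 / ε ^ 2 * ‖weightedL2 n T ((1 + ε) / 2) (boxTestFn _ z)‖ ^ 2 := by
        rw [norm_weightedL2_sq, norm_weightedL2_sq, lhs, rhs]
        exact setIntegral_slab_bracketPow_mul_sq_le h₀ h₁ hn hT z.2
    _ ≤ 28 ^ 2 * n ^ 2 / ε ^ 2 * ‖weightedL2 n T ((1 + ε) / 2) (boxTestFn _ z)‖ ^ 2 := by
        gcongr
        norm_num
    _ = _ := by rw [mul_pow, div_pow, mul_pow]

theorem exists_weak_representative (h₀ : 0 < ε) (h₁ : ε ≤ 1) (hn : 3 ≤ n) (hT : 0 ≤ T)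
    {w : SmoothFn (ℝ × Eu n)} (hw₀ : ∀ x, w (0, x) = 0) (hw₁ : ∀ x, timeDeriv w (0, x) = 0)
    (hG : MemLp (lift (bracketPow ((3 + ε) / 2) : SmoothFn (Eu n)) * box w) 2
      (volume.restrict (slab n T))) :
    ∃ y : Lp ℝ 2 (volume.restrict (slab n T)), ‖y‖ ≤ 28 * n / ε * ‖hG.toLp‖ ∧
      ∀ z ∈ testFn {p : ℝ × Eu n | p.1 < T}, ∫ p in slab n T, w p * box z p =
        ∫ p in slab n T, y p * (bracketPow ((1 + ε) / 2) p.2 * box z p) := by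
  set G := hG.toLp
  obtain ⟨y, norm_le, represents⟩ := exists_inner_eq_of_abs_le_mul_norm
    (weightedL2 n T ((1 + ε) / 2) ∘ₗ boxTestFn _)
    ((innerSL ℝ G).toLinearMap ∘ₗ weightedL2 n T (-((3 + ε) / 2)))
    (c := 28 * n / ε * ‖G‖) (by positivity) fun z ↦ by
      calc |inner ℝ G (weightedL2 n T (-((3 + ε) / 2)) z)|
          ≤ ‖G‖ * ‖weightedL2 n T (-((3 + ε) / 2)) z‖ := abs_real_inner_le_norm _ _
        _ ≤ ‖G‖ * (28 * n / ε * ‖weightedL2 n T ((1 + ε) / 2) (boxTestFn _ z)‖) := by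
            gcongr
            exact norm_weightedL2_le_norm_weightedL2_box h₀ h₁ hn hT z
        _ = _ := by rw [mul_left_comm, ← mul_assoc]; rfl
  refine ⟨y, norm_le, fun z hz ↦ ?_⟩
  have pairing : ∫ p in slab n T, box w p * z p =
      inner ℝ G (weightedL2 n T (-((3 + ε) / 2)) ⟨z, hz⟩) := by
    rw [inner_weightedL2]
    refine integral_congr_ae ?_
    filter_upwards [hG.coeFn_toLp] with p hp
    rw [hp, SmoothFn.mul_apply, lift_apply, mul_mul_mul_comm,
      bracketPow_mul_bracketPow_neg, one_mul]
  rw [setIntegral_slab_mul_box hT hw₀ hw₁ hz, pairing, ← inner_weightedL2 _ y ⟨box z, _⟩]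
  exact (represents ⟨z, hz⟩).symm

theorem lift_bracketPow_neg_mul_ae_eq {a : ℝ} {w : SmoothFn (ℝ × Eu n)}
    {y : Lp ℝ 2 (volume.restrict (slab n T))}
    (hy : ∀ z ∈ testFn {p : ℝ × Eu n | p.1 < T}, ∫ p in slab n T, w p * box z p =
      ∫ p in slab n T, y p * (bracketPow a p.2 * box z p)) :
    lift (bracketPow (-a) : SmoothFn (Eu n)) * w =ᵐ[volume.restrict (slab n T)] y := by
  have y_loc : LocallyIntegrable y (volume.restrict (slab n T)) :=
    (Lp.memLp y).locallyIntegrable one_le_two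
  have lifted_loc : LocallyIntegrable (fun p ↦ y p * bracketPow a p.2)
      (volume.restrict (slab n T)) := by
    rw [locallyIntegrable_iff] at y_loc ⊢
    exact fun K hK ↦ (y_loc K hK).mul_continuousOn
      (lift (bracketPow a : SmoothFn (Eu n))).continuous.continuousOn hK
  have difference := ae_slab_eq_zero_of_weak_box_eq_zero
    (w.continuous.locallyIntegrable.sub lifted_loc) fun z hz ↦ by
      have boxTest := box_mem_testFn hz
      have int₁ : Integrable (fun p ↦ w p * box z p) (volume.restrict (slab n T)) :=
        integrable_of_mem_testFn (Ideal.mul_mem_left _ w boxTest)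
      have int₂ : Integrable (fun p ↦ y p * (bracketPow a p.2 * box z p))
          (volume.restrict (slab n T)) :=
        (Lp.memLp y).integrable_mul (memLp_of_mem_testFn
          (Ideal.mul_mem_left _ (lift (bracketPow a : SmoothFn (Eu n))) boxTest))
      simp only [Pi.sub_apply, sub_mul, mul_assoc]
      rw [integral_sub int₁ int₂, hy z hz, sub_self]
  filter_upwards [difference] with p hp
  rw [SmoothFn.mul_apply, lift_apply, sub_eq_zero.1 hp, mul_comm, mul_assoc,
    bracketPow_mul_bracketPow_neg, mul_one]

theorem eLpNorm_slab_le_box (h₀ : 0 < ε) (h₁ : ε ≤ 1) (hn : 3 ≤ n) (hT : 0 ≤ T)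
    {w : SmoothFn (ℝ × Eu n)} (hw₀ : ∀ x, w (0, x) = 0) (hw₁ : ∀ x, timeDeriv w (0, x) = 0) :
    eLpNorm (lift (bracketPow (-((1 + ε) / 2)) : SmoothFn (Eu n)) * w) 2
        (volume.restrict (slab n T)) ≤
      .ofReal (28 * n / ε) * eLpNorm (lift (bracketPow ((3 + ε) / 2) : SmoothFn (Eu n)) * box w) 2
        (volume.restrict (slab n T)) := by
  by_cases hG : MemLp (lift (bracketPow ((3 + ε) / 2) : SmoothFn (Eu n)) * box w) 2
    (volume.restrict (slab n T))
  · obtain ⟨y, norm_le, hy⟩ := exists_weak_representative h₀ h₁ hn hT hw₀ hw₁ hG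
    rw [eLpNorm_congr_ae (lift_bracketPow_neg_mul_ae_eq hy), ← Lp.enorm_def, ← Lp.enorm_toLp hG,
      ← ofReal_norm, ← ofReal_norm, ← ENNReal.ofReal_mul (by positivity)]
    exact ENNReal.ofReal_le_ofReal norm_le
  · have infinite : eLpNorm (lift (bracketPow ((3 + ε) / 2) : SmoothFn (Eu n)) * box w) 2
        (volume.restrict (slab n T)) = ⊤ := by
      by_contra h
      exact hG ⟨(SmoothFn.continuous _).aestronglyMeasurable, lt_top_iff_ne_top.2 h⟩
    have : (0 : ℝ) < n := mod_cast (by omega : 0 < n)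
    rw [infinite, ENNReal.mul_top (by simpa using (by positivity : 0 < 28 * n / ε))]
    exact le_top

end DualEstimate

/-! ### Compactly supported forcing -/

section CompactForcing

variable {n : ℕ} {T R : ℝ}

theorem td_eq_timeDeriv (w : SmoothFn (ℝ × Eu n)) (t : ℝ) (x : Eu n) :
    td (fun s y ↦ w (s, y)) t x = timeDeriv w (t, x) := (hasDerivAt_time w t x).deriv

theorem sd_eq_spaceDeriv (i : Fin n) (w : SmoothFn (ℝ × Eu n)) (t : ℝ) (x : Eu n) :
    sd i (fun y ↦ w (t, y)) x = spaceDeriv i w (t, x) :=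
  congr($(partialDeriv_slice i t w) x)

theorem dAlembert_eq_box (w : SmoothFn (ℝ × Eu n)) (t : ℝ) (x : Eu n) :
    dAlembert (fun s y ↦ w (s, y)) t x = box w (t, x) := by
  have time : td (fun s y ↦ w (s, y)) = fun s y ↦ timeDeriv w (s, y) :=
    funext₂ (td_eq_timeDeriv w)
  have space (i : Fin n) : sd i (fun y ↦ w (t, y)) = fun y ↦ spaceDeriv i w (t, y) :=
    funext (sd_eq_spaceDeriv i w t)
  simp only [dAlembert, time, space, td_eq_timeDeriv, sd_eq_spaceDeriv, waveOp_apply,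
    SmoothFn.sub_apply, SmoothFn.sum_apply]

theorem L2st_univ (T : ℝ) (u : ℝ → Eu n → ℝ) :
    L2st T univ u = eLpNorm (fun p ↦ u p.1 p.2) 2 (volume.restrict (slab n T)) := by
  rw [L2st, Measure.prod_restrict, ← Measure.volume_eq_prod, slab]

theorem eLpNorm_slab_bracketPow_mul_le {a : ℝ} (ha : a ≤ 2) {f : ℝ × Eu n → ℝ}
    (hf : ∀ p ∈ slab n T, R < ‖p.2‖ → f p = 0) :
    eLpNorm (fun p ↦ bracketPow a p.2 * f p) 2 (volume.restrict (slab n T)) ≤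
      .ofReal (1 + R ^ 2) * eLpNorm f 2 (volume.restrict (slab n T)) := by
  refine eLpNorm_le_mul_eLpNorm_of_ae_le_mul ?_ 2
  filter_upwards [ae_restrict_mem (measurableSet_slab T)] with p hp
  obtain outside | inside := lt_or_ge R ‖p.2‖
  · simp [hf p hp outside]
  · rw [norm_mul, norm_of_nonneg (bracketPow_pos a p.2).le]
    gcongr
    calc bracketPow a p.2 = jap p.2 ^ a := bracketPow_apply a p.2
      _ ≤ jap p.2 ^ (2 : ℝ) := rpow_le_rpow_of_exponent_le (one_le_jap p.2) ha
      _ = 1 + ‖p.2‖ ^ 2 := by rw [rpow_two, sq_jap]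
      _ ≤ 1 + R ^ 2 := by gcongr

theorem eLpNorm_jap_rpow_mul_mono {a b : ℝ} (hab : a ≤ b) (f : ℝ × Eu n → ℝ)
    (μ : Measure (ℝ × Eu n)) :
    eLpNorm (fun p ↦ jap p.2 ^ a * f p) 2 μ ≤ eLpNorm (fun p ↦ jap p.2 ^ b * f p) 2 μ := by
  refine eLpNorm_mono fun p ↦ ?_
  have := rpow_le_rpow_of_exponent_le (one_le_jap p.2) hab
  rw [norm_mul, norm_mul, norm_of_nonneg (rpow_nonneg (jap_pos p.2).le a),
    norm_of_nonneg (rpow_nonneg (jap_pos p.2).le b)]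
  gcongr

theorem localized_energy_cpt_forcing_general (hn : 3 ≤ n) {δ : ℝ} (hδ : 0 < δ) (R : ℝ) :
    ∃ C : ℝ, 0 < C ∧ ∀ (w F : ℝ → Eu n → ℝ) (T : ℝ), 0 ≤ T → SmoothTX w →
      (∀ t ∈ Icc 0 T, ∀ x, dAlembert w t x = F t x) →
      (∀ x, w 0 x = 0) → (∀ x, td w 0 x = 0) →
      (∀ t ∈ Icc 0 T, ∀ x, R < ‖x‖ → F t x = 0) →
        L2st T univ (fun t x ↦ jap x ^ (-(1 / 2 : ℝ) - δ) * w t x) ≤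
          ENNReal.ofReal C * L2st T univ F := by
  have : (0 : ℝ) < n := mod_cast (by omega : 0 < n)
  obtain ⟨ε, hε⟩ : ∃ ε, ε = min (2 * δ) 1 := ⟨_, rfl⟩
  have ε_pos : 0 < ε := hε ▸ lt_min (by linarith) one_pos
  have ε_le_one : ε ≤ 1 := hε ▸ min_le_right _ _
  have ε_le : ε ≤ 2 * δ := hε ▸ min_le_left _ _
  refine ⟨28 * n / ε * (1 + R ^ 2), by positivity, fun w F T hT hw hF hw₀ hw₁ hsupp ↦ ?_⟩
  let W : SmoothFn (ℝ × Eu n) := .mk (fun p ↦ w p.1 p.2) hw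
  have box_W (p) (hp : p ∈ slab n T) : box W p = F p.1 p.2 :=
    (dAlembert_eq_box W p.1 p.2).symm.trans (hF p.1 hp.1 p.2)
  have dual := eLpNorm_slab_le_box ε_pos ε_le_one hn hT (w := W) hw₀
    fun x ↦ (td_eq_timeDeriv W 0 x).symm.trans (hw₁ x)
  have support := eLpNorm_slab_bracketPow_mul_le (a := (3 + ε) / 2) (by linarith)
    fun p hp hR ↦ (box_W p hp).trans (hsupp p.1 hp.1 p.2 hR)
  have forcing : eLpNorm (box W) 2 (volume.restrict (slab n T)) = L2st T univ F := by
    rw [L2st_univ]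
    exact eLpNorm_congr_ae ((ae_restrict_mem (measurableSet_slab T)).mono box_W)
  rw [L2st_univ, ENNReal.ofReal_mul (by positivity), mul_assoc, ← forcing]
  calc _ ≤ _ := eLpNorm_jap_rpow_mul_mono (b := -((1 + ε) / 2)) (by linarith) W _
    _ = _ := by simp only [← bracketPow_apply]; rfl
    _ ≤ _ := dual
    _ ≤ _ := mul_le_mul_right support _

end CompactForcing

/-- Localized energy estimate with compactly supported L² forcing. -/
theorem localized_energy_cpt_forcing (δ : ℝ) (hδ : 0 < δ) :
    ∃ C : ℝ, 0 < C ∧ ∀ (w F : ℝ → Eu 4 → ℝ), SmoothTX w →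
      (∀ t : ℝ, 0 ≤ t → ∀ x, dAlembert w t x = F t x) →
      (∀ x, w 0 x = 0) → (∀ x, td w 0 x = 0) →
      (∀ t : ℝ, ∀ x : Eu 4, 2 < ‖x‖ → F t x = 0) →
      ∀ T : ℝ, 0 < T →
        L2st T univ (fun t x => jap x ^ (-(1/2 : ℝ) - δ) * w t x)
          ≤ ENNReal.ofReal C * L2st T univ F := by
  obtain ⟨C, hC, bound⟩ := localized_energy_cpt_forcing_general (n := 4) (by norm_num) hδ 2
  exact ⟨C, hC, fun w F hw hF hw₀ hw₁ hsupp T hT ↦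
    bound w F T hT.le hw (fun t ht ↦ hF t ht.1) hw₀ hw₁ fun t _ ↦ hsupp t⟩
end
end

section
/- There is a constant C such that for every h ∈ C^∞(ℝ⁴) and every R > 1, ‖h‖_{L^∞({x : R ≤ |x| ≤ 2R})} ≤ C R^{−3/2} Σ_{|μ|≤2, j≤1} ‖Ω^μ ∇_r^j h‖_{L²({x : R/2 ≤ |x| ≤ 4R})}. -/
/-!
Write `x = r₀ ω` with `‖ω‖ = 1`. Along the ray through `ω`, the fundamental theorem of calculus
applied to `(r₀ + ℓ - r) h (rω)` bounds `ℓ |h x|` by the integral of `|h| + ℓ |∇_r h|` over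
`r ∈ [r₀, r₀ + ℓ]`, a segment inside the annulus if `ℓ ≤ 2R`.

At each radius `r` let `f` be `h` or `∇_r h`, and let `v` be a unit vector orthogonal to `ω`. Along
the great circle `s ↦ r (cos s ω + sin s v)` the derivative in `s` is a combination of the `Ω_{jk}`
whose coefficients, the Plücker coordinates of `ω ∧ v`, are constant and at most `1`. As
`G s = (1 - s)² f` has `G 1 = G' 1 = 0`, it satisfies `G 0 = ∫₀¹ s G'' ds`, and so
`|f (rω)| ≤ 4 ∫₀¹ s ∑_{|μ| ≤ 2} |Ω^μ f| ds`. Two derivatives are spent in order to gain the weight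
`s`, whose square makes up for the factor `sin² s` in the volume element `r³ sin² s dr ds dv` of
`ℝ⁴` in these coordinates.

By Cauchy–Schwarz over the rectangle of all `(r, s)` and integration over `v ∈ S²`, `|h x|²` is at
most a multiple of `ℓ⁻¹` times the integral of `s² F²`, where `F = ∑ ℓ^j |Ω^μ ∇_r^j h|`. As
`s ≤ 2 sin s` and `r ≥ R`, replacing `s² dr ds dv` by Lebesgue measure costs a factor `4 R⁻³`, which
is `2 R^{-3/2}` after the square root. The theorem is the case `ℓ = 1`.
-/

open MeasureTheory Real Set
open scoped ENNReal FourierTransform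

noncomputable section

/-! ### Polar coordinates along great circles -/

/-- The great circle through `ω` with initial velocity `v`, parametrised by arc length when `ω` and
`v` are orthonormal. -/
def greatCircle {E : Type*} [AddCommGroup E] [Module ℝ E] (ω v : E) (s : ℝ) : E :=
  cos s • ω + sin s • v

@[simp]
theorem greatCircle_zero {E : Type*} [AddCommGroup E] [Module ℝ E] (ω v : E) :
    greatCircle ω v 0 = ω := by
  simp [greatCircle]

theorem hasDerivAt_greatCircle {E : Type*} [NormedAddCommGroup E] [NormedSpace ℝ E] (ω v : E)
    (s : ℝ) : HasDerivAt (greatCircle ω v) (cos s • v - sin s • ω) s :=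
  (((hasDerivAt_cos s).smul_const ω).add ((hasDerivAt_sin s).smul_const v)).congr_deriv (by module)

@[fun_prop]
theorem continuous_greatCircle {E : Type*} [NormedAddCommGroup E] [NormedSpace ℝ E] (ω v : E) :
    Continuous (greatCircle ω v) := by
  unfold greatCircle
  fun_prop

section InnerProductSpace

variable {E : Type*} [NormedAddCommGroup E] [InnerProductSpace ℝ E] {ω v : E}

theorem inner_left_greatCircle (hω : ‖ω‖ = 1) (hωv : inner ℝ ω v = 0) (s : ℝ) :
    inner ℝ ω (greatCircle ω v s) = cos s := by
  simp [greatCircle, inner_add_right, inner_smul_right, hω, hωv]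

theorem inner_right_greatCircle (hv : ‖v‖ = 1) (hωv : inner ℝ ω v = 0) (s : ℝ) :
    inner ℝ v (greatCircle ω v s) = sin s := by
  simp [greatCircle, inner_add_right, inner_smul_right, hv, real_inner_comm, hωv]

theorem norm_greatCircle (hω : ‖ω‖ = 1) (hv : ‖v‖ = 1) (hωv : inner ℝ ω v = 0) (s : ℝ) :
    ‖greatCircle ω v s‖ = 1 := by
  rw [← sq_eq_sq₀ (norm_nonneg _) zero_le_one, ← real_inner_self_eq_norm_sq]
  nth_rw 1 [greatCircle]
  rw [inner_add_left, inner_smul_left, inner_smul_left, inner_left_greatCircle hω hωv,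
    inner_right_greatCircle hv hωv]
  simp [← sq]

theorem norm_smul_greatCircle (hω : ‖ω‖ = 1) (hv : ‖v‖ = 1) (hωv : inner ℝ ω v = 0) {r : ℝ}
    (hr : 0 ≤ r) (s : ℝ) : ‖r • greatCircle ω v s‖ = r := by
  rw [norm_smul, norm_greatCircle hω hv hωv, Real.norm_of_nonneg hr, mul_one]

theorem exists_linearIsometry_orthogonal {n : ℕ} (hn : Module.finrank ℝ E = n + 1) (hω : ω ≠ 0) :
    ∃ J : Eu n →ₗᵢ[ℝ] E, ∀ z, inner ℝ ω (J z) = 0 := by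
  have : Fact (Module.finrank ℝ E = n + 1) := ⟨hn⟩
  refine ⟨(ℝ ∙ ω)ᗮ.subtypeₗᵢ.comp
    (OrthonormalBasis.fromOrthogonalSpanSingleton n hω).repr.symm.toLinearIsometry, fun z => ?_⟩
  exact Submodule.mem_orthogonal_singleton_iff_inner_right.1 (Subtype.property _)

end InnerProductSpace

theorem lintegral_eq_lintegral_toSphere {F : Type*} [NormedAddCommGroup F] [NormedSpace ℝ F]
    [FiniteDimensional ℝ F] [Nontrivial F] [MeasurableSpace F] [BorelSpace F] (μ : Measure F)
    [μ.IsAddHaarMeasure] {f : F → ℝ≥0∞} (hf : Measurable f) :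
    ∫⁻ z, f z ∂μ = ∫⁻ v : Metric.sphere (0 : F) 1, (∫⁻ ρ in Ioi (0 : ℝ),
      ENNReal.ofReal (ρ ^ (Module.finrank ℝ F - 1)) * f (ρ • (v : F))) ∂μ.toSphere := by
  calc ∫⁻ z, f z ∂μ = ∫⁻ z : ({0}ᶜ : Set F), f z ∂(μ.comap (↑)) := by
        rw [lintegral_subtype_comap (measurableSet_singleton _).compl, restrict_compl_singleton]
    _ = ∫⁻ q, f ((q.2 : ℝ) • (q.1 : F)) ∂μ.toSphere.prod
          (.volumeIoiPow (Module.finrank ℝ F - 1)) := by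
        rw [← μ.measurePreserving_homeomorphUnitSphereProd.lintegral_comp_emb
          (Homeomorph.measurableEmbedding _)]
        refine lintegral_congr fun z => congrArg f ?_
        exact (congrArg Subtype.val ((homeomorphUnitSphereProd F).symm_apply_apply z)).symm
    _ = _ := by
        rw [lintegral_prod _ (by fun_prop)]
        refine lintegral_congr fun v => ?_
        rw [Measure.volumeIoiPow, lintegral_withDensity_eq_lintegral_mul _ (by fun_prop)
          (by fun_prop)]
        exact lintegral_subtype_comap measurableSet_Ioi
          fun ρ : ℝ => ENNReal.ofReal (ρ ^ (Module.finrank ℝ F - 1)) * f (ρ • (v : F))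

theorem lintegral_lintegral_Ioi_eq_polar {g : ℝ × ℝ → ℝ≥0∞} (hg : Measurable g) :
    ∫⁻ t : ℝ, ∫⁻ ρ in Ioi (0 : ℝ), g (t, ρ) =
      ∫⁻ p in Ioi (0 : ℝ) ×ˢ Ioo 0 π, ENNReal.ofReal p.1 * g (p.1 * cos p.2, p.1 * sin p.2) := by
  have hdom : Ioi (0 : ℝ) ×ˢ Ioo 0 π = polarCoord.target ∩ {p | 0 < p.1 * sin p.2} := by
    ext ⟨r, s⟩
    simp only [polarCoord_target, mem_prod, mem_Ioi, mem_Ioo, mem_inter_iff, mem_ofPred_eq]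
    constructor
    · rintro ⟨hr, hs, hsπ⟩
      exact ⟨⟨hr, by linarith [pi_pos], hsπ⟩, mul_pos hr (sin_pos_of_pos_of_lt_pi hs hsπ)⟩
    · rintro ⟨⟨hr, hs, hsπ⟩, hrs⟩
      refine ⟨hr, ?_, hsπ⟩
      by_contra! hs0
      exact (pos_of_mul_pos_right hrs hr.le).not_ge (sin_nonpos_of_nonpos_of_neg_pi_le hs0 hs.le)
  have hhalf : MeasurableSet (univ ×ˢ Ioi (0 : ℝ) : Set (ℝ × ℝ)) :=
    MeasurableSet.univ.prod measurableSet_Ioi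
  calc ∫⁻ t : ℝ, ∫⁻ ρ in Ioi (0 : ℝ), g (t, ρ)
      = ∫⁻ q, (univ ×ˢ Ioi (0 : ℝ)).indicator g q := by
        rw [lintegral_indicator hhalf, Measure.volume_eq_prod, setLIntegral_prod _ (by fun_prop),
          Measure.restrict_univ]
    _ = ∫⁻ p in polarCoord.target, {p : ℝ × ℝ | 0 < p.1 * sin p.2}.indicator
          (fun p => ENNReal.ofReal p.1 * g (p.1 * cos p.2, p.1 * sin p.2)) p := by
        rw [← lintegral_comp_polarCoord_symm]
        refine lintegral_congr fun p => ?_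
        simp [indicator_apply, polarCoord_symm_apply]
    _ = _ := by
        rw [setLIntegral_indicator (measurableSet_lt (by fun_prop) (by fun_prop)), inter_comm,
          ← hdom]

section Hyperplane

variable {E F : Type*} [NormedAddCommGroup E] [InnerProductSpace ℝ E] [FiniteDimensional ℝ E]
  [MeasurableSpace E] [BorelSpace E] [NormedAddCommGroup F] [InnerProductSpace ℝ F]
  [FiniteDimensional ℝ F] [MeasurableSpace F] [BorelSpace F] {ω : E} {J : F →ₗᵢ[ℝ] E}

theorem measurePreserving_smul_add (hω : ‖ω‖ = 1) (hJ : ∀ z, inner ℝ ω (J z) = 0)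
    (hEF : Module.finrank ℝ E = Module.finrank ℝ F + 1) :
    MeasurePreserving (fun p : ℝ × F => p.1 • ω + J p.2) := by
  let L : WithLp 2 (ℝ × F) →ₗ[ℝ] E :=
    ((LinearMap.toSpanSingleton ℝ E ω).coprod J.toLinearMap) ∘ₗ
      (WithLp.linearEquiv 2 ℝ (ℝ × F)).toLinearMap
  have hL : ∀ p, ‖L p‖ = ‖p‖ := fun p => by
    rw [← sq_eq_sq₀ (norm_nonneg _) (norm_nonneg _), WithLp.prod_norm_sq_eq_of_L2]
    simp [L, norm_add_sq_real, inner_smul_left, hJ, norm_smul, hω]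
  let e : WithLp 2 (ℝ × F) ≃ₗᵢ[ℝ] E := LinearIsometry.toLinearIsometryEquiv ⟨L, hL⟩ (by
    rw [(WithLp.linearEquiv 2 ℝ (ℝ × F)).finrank_eq, Module.finrank_prod, Module.finrank_self,
      hEF, add_comm])
  exact e.measurePreserving.comp (WithLp.volume_preserving_toLp ℝ F)

/-- Spherical coordinates on the hyperplane `ωᗮ ≃ F`, followed by plane polar coordinates in the
pair (component along `ω`, radius in `ωᗮ`): with `ρ = r sin s` the weight `ρ ^ n dρ dt` becomes
`r ^ (n + 1) sin s ^ n dr ds`. -/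
theorem lintegral_eq_lintegral_greatCircle {n : ℕ} (hF : Module.finrank ℝ F = n + 1)
    (hE : Module.finrank ℝ E = n + 2) (hω : ‖ω‖ = 1) (hJ : ∀ z, inner ℝ ω (J z) = 0)
    {Φ : E → ℝ≥0∞} (hΦ : Measurable Φ) :
    ∫⁻ y, Φ y = ∫⁻ v : Metric.sphere (0 : F) 1, (∫⁻ p in Ioi (0 : ℝ) ×ˢ Ioo 0 π,
      ENNReal.ofReal (p.1 ^ (n + 1) * sin p.2 ^ n) * Φ (p.1 • greatCircle ω (J v) p.2))
        ∂(volume : Measure F).toSphere := by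
  have : Nontrivial F := Module.nontrivial_of_finrank_eq_succ hF
  have hJm : Measurable J := J.continuous.measurable
  have hmp := measurePreserving_smul_add hω hJ (by rw [hE, hF])
  calc ∫⁻ y, Φ y = ∫⁻ t : ℝ, ∫⁻ z : F, Φ (t • ω + J z) := by
        rw [← hmp.lintegral_comp hΦ, Measure.volume_eq_prod, lintegral_prod _ (by fun_prop)]
    _ = ∫⁻ t : ℝ, ∫⁻ v : Metric.sphere (0 : F) 1, (∫⁻ ρ in Ioi (0 : ℝ),
          ENNReal.ofReal (ρ ^ n) * Φ (t • ω + ρ • J v)) ∂(volume : Measure F).toSphere := by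
        refine lintegral_congr fun t => ?_
        rw [lintegral_eq_lintegral_toSphere _ (by fun_prop), hF]
        simp only [map_smul, Nat.add_sub_cancel]
    _ = ∫⁻ v : Metric.sphere (0 : F) 1, (∫⁻ t : ℝ, ∫⁻ ρ in Ioi (0 : ℝ),
          ENNReal.ofReal (ρ ^ n) * Φ (t • ω + ρ • J v)) ∂(volume : Measure F).toSphere := by
        refine lintegral_lintegral_swap (Measurable.aemeasurable ?_)
        exact Measurable.lintegral_prod_right' (f := fun q : (ℝ × Metric.sphere (0 : F) 1) × ℝ =>
          ENNReal.ofReal (q.2 ^ n) * Φ (q.1.1 • ω + q.2 • J q.1.2)) (by fun_prop)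
    _ = _ := by
        refine lintegral_congr fun v => ?_
        rw [lintegral_lintegral_Ioi_eq_polar
          (g := fun q => ENNReal.ofReal (q.2 ^ n) * Φ (q.1 • ω + q.2 • J v)) (by fun_prop)]
        refine setLIntegral_congr_fun (measurableSet_Ioi.prod measurableSet_Ioo) fun p hp => ?_
        have hr : 0 ≤ p.1 := (mem_Ioi.1 hp.1).le
        simp only [greatCircle, smul_add, smul_smul]
        rw [← mul_assoc, ← ENNReal.ofReal_mul hr]
        ring_nf

end Hyperplane

theorem toSphere_volume_univ_Eu_three :
    (volume : Measure (Eu 3)).toSphere univ = ENNReal.ofReal (4 * π) := by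
  rw [Measure.toSphere_apply_univ, EuclideanSpace.volume_ball_fin_three, finrank_euclideanSpace_fin,
    ENNReal.ofReal_one, one_pow, one_mul, ← ENNReal.ofReal_natCast,
    ← ENNReal.ofReal_mul (Nat.cast_nonneg _)]
  congr 1
  push_cast
  ring

/-! ### One-dimensional estimates -/

theorem enorm_deriv_deriv_cutoff_le {G : Type*} [NormedAddCommGroup G] [NormedSpace ℝ G] {s : ℝ}
    (hs : s ∈ Icc (0 : ℝ) 1) (u u' u'' : G) :
    ‖(1 - s) ^ 2 • u'' - (4 * (1 - s)) • u' + (2 : ℝ) • u‖ₑ ≤ 4 * (‖u‖ₑ + ‖u'‖ₑ + ‖u''‖ₑ) := by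
  have h₂ : ‖(1 - s) ^ 2‖ₑ ≤ 4 := by
    rw [Real.enorm_of_nonneg (by positivity)]
    exact ENNReal.ofReal_le_ofNat.2 (by nlinarith [hs.1, hs.2])
  have h₁ : ‖4 * (1 - s)‖ₑ ≤ 4 := by
    rw [Real.enorm_of_nonneg (by linarith [hs.2])]
    exact ENNReal.ofReal_le_ofNat.2 (by linarith [hs.1])
  have h₀ : ‖(2 : ℝ)‖ₑ ≤ 4 := by
    rw [Real.enorm_of_nonneg zero_le_two]
    norm_num
  calc ‖(1 - s) ^ 2 • u'' - (4 * (1 - s)) • u' + (2 : ℝ) • u‖ₑ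
      ≤ ‖(1 - s) ^ 2‖ₑ * ‖u''‖ₑ + ‖4 * (1 - s)‖ₑ * ‖u'‖ₑ + ‖(2 : ℝ)‖ₑ * ‖u‖ₑ := by
        simp only [← enorm_smul]
        exact (enorm_add_le _ _).trans (by gcongr; exact enorm_sub_le)
    _ ≤ 4 * ‖u''‖ₑ + 4 * ‖u'‖ₑ + 4 * ‖u‖ₑ := by gcongr
    _ = 4 * (‖u‖ₑ + ‖u'‖ₑ + ‖u''‖ₑ) := by ring

section OneDimensional

variable {G : Type*} [NormedAddCommGroup G] [NormedSpace ℝ G] [CompleteSpace G]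

theorem enorm_sub_le_lintegral_enorm_of_hasDerivAt {g g' : ℝ → G} {a b : ℝ} (hab : a ≤ b)
    (hg : ∀ s ∈ Icc a b, HasDerivAt g (g' s) s) (hg' : ContinuousOn g' (Icc a b)) :
    ‖g b - g a‖ₑ ≤ ∫⁻ s in Ioc a b, ‖g' s‖ₑ := by
  rw [← intervalIntegral.integral_eq_sub_of_hasDerivAt (by rwa [uIcc_of_le hab])
    (hg'.intervalIntegrable_of_Icc hab), intervalIntegral.integral_of_le hab]
  exact enorm_integral_le_lintegral_enorm _

theorem ofReal_mul_enorm_le_lintegral {g g' : ℝ → G} {a ℓ : ℝ} (hℓ : 0 ≤ ℓ)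
    (hg : ∀ r ∈ Icc a (a + ℓ), HasDerivAt g (g' r) r)
    (hg' : ContinuousOn g' (Icc a (a + ℓ))) :
    ENNReal.ofReal ℓ * ‖g a‖ₑ ≤
      ∫⁻ r in Ioc a (a + ℓ), (‖g r‖ₑ + ENNReal.ofReal ℓ * ‖g' r‖ₑ) := by
  have hcont : ContinuousOn g (Icc a (a + ℓ)) := fun r hr =>
    (hg r hr).continuousAt.continuousWithinAt
  have hderiv : ∀ r ∈ Icc a (a + ℓ),
      HasDerivAt (fun r => (a + ℓ - r) • g r) ((a + ℓ - r) • g' r - g r) r := fun r hr =>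
    (((hasDerivAt_id r).const_sub (a + ℓ)).smul (hg r hr)).congr_deriv (by simp [sub_eq_add_neg])
  calc ENNReal.ofReal ℓ * ‖g a‖ₑ
      = ‖(a + ℓ - (a + ℓ)) • g (a + ℓ) - (a + ℓ - a) • g a‖ₑ := by
        rw [sub_self, zero_smul, zero_sub, enorm_neg, add_sub_cancel_left, enorm_smul,
          Real.enorm_of_nonneg hℓ]
    _ ≤ ∫⁻ r in Ioc a (a + ℓ), ‖(a + ℓ - r) • g' r - g r‖ₑ :=
        enorm_sub_le_lintegral_enorm_of_hasDerivAt (by linarith) hderiv (by fun_prop)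
    _ ≤ _ := by
        refine setLIntegral_mono' measurableSet_Ioc fun r hr => enorm_sub_le.trans ?_
        rw [enorm_smul, add_comm, Real.enorm_of_nonneg (by linarith [hr.2])]
        gcongr
        linarith [hr.1]

theorem enorm_le_lintegral_of_eq_zero_of_deriv_eq_zero {g g' g'' : ℝ → G} {b : ℝ} (hb : 0 ≤ b)
    (hg : ∀ s ∈ Icc 0 b, HasDerivAt g (g' s) s) (hg' : ∀ s ∈ Icc 0 b, HasDerivAt g' (g'' s) s)
    (hg'' : ContinuousOn g'' (Icc 0 b)) (hgb : g b = 0) (hgb' : g' b = 0) :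
    ‖g 0‖ₑ ≤ ∫⁻ s in Ioc 0 b, ENNReal.ofReal s * ‖g'' s‖ₑ := by
  have hderiv : ∀ s ∈ Icc 0 b, HasDerivAt (fun s => s • g' s - g s) (s • g'' s) s := fun s hs =>
    (((hasDerivAt_id s).smul (hg' s hs)).sub (hg s hs)).congr_deriv (by simp)
  calc ‖g 0‖ₑ = ‖b • g' b - g b - ((0 : ℝ) • g' 0 - g 0)‖ₑ := by simp [hgb, hgb']
    _ ≤ ∫⁻ s in Ioc 0 b, ‖s • g'' s‖ₑ :=
        enorm_sub_le_lintegral_enorm_of_hasDerivAt hb hderiv (by fun_prop)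
    _ = _ := setLIntegral_congr_fun measurableSet_Ioc fun s hs => by
        simp only [enorm_smul, Real.enorm_of_nonneg hs.1.le]

theorem enorm_le_lintegral_enorm_deriv_deriv {g g' g'' : ℝ → G}
    (hg : ∀ s ∈ Icc (0 : ℝ) 1, HasDerivAt g (g' s) s)
    (hg' : ∀ s ∈ Icc (0 : ℝ) 1, HasDerivAt g' (g'' s) s) (hg'' : ContinuousOn g'' (Icc 0 1)) :
    ‖g 0‖ₑ ≤ ∫⁻ s in Ioc (0 : ℝ) 1, ENNReal.ofReal (4 * s) * (‖g s‖ₑ + ‖g' s‖ₑ + ‖g'' s‖ₑ) := by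
  have hcont : ContinuousOn g (Icc 0 1) := fun s hs => (hg s hs).continuousAt.continuousWithinAt
  have hcont' : ContinuousOn g' (Icc 0 1) := fun s hs =>
    (hg' s hs).continuousAt.continuousWithinAt
  let k : ℝ → G := fun s => (1 - s) ^ 2 • g s
  let k' : ℝ → G := fun s => (1 - s) ^ 2 • g' s - (2 * (1 - s)) • g s
  let k'' : ℝ → G := fun s => (1 - s) ^ 2 • g'' s - (4 * (1 - s)) • g' s + (2 : ℝ) • g s
  have hlin (s : ℝ) : HasDerivAt (fun s => 1 - s) (-1 : ℝ) s := (hasDerivAt_id s).const_sub 1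
  have hsq (s : ℝ) : HasDerivAt (fun s : ℝ => (1 - s) ^ 2) (-(2 * (1 - s))) s :=
    ((hlin s).fun_pow 2).congr_deriv (by norm_num)
  have hk : ∀ s ∈ Icc (0 : ℝ) 1, HasDerivAt k (k' s) s := fun s hs =>
    ((hsq s).smul (hg s hs)).congr_deriv (by simp only [k']; module)
  have hk' : ∀ s ∈ Icc (0 : ℝ) 1, HasDerivAt k' (k'' s) s := fun s hs =>
    (((hsq s).smul (hg' s hs)).sub (((hlin s).const_mul 2).smul (hg s hs))).congr_deriv
      (by simp only [k'']; module)
  calc ‖g 0‖ₑ = ‖k 0‖ₑ := by simp [k]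
    _ ≤ ∫⁻ s in Ioc (0 : ℝ) 1, ENNReal.ofReal s * ‖k'' s‖ₑ :=
        enorm_le_lintegral_of_eq_zero_of_deriv_eq_zero zero_le_one hk hk' (by fun_prop)
          (by simp [k]) (by simp [k'])
    _ ≤ _ := setLIntegral_mono' measurableSet_Ioc fun s hs => by
        rw [mul_comm 4, ENNReal.ofReal_mul hs.1.le, ENNReal.ofReal_ofNat, mul_assoc]
        gcongr
        exact enorm_deriv_deriv_cutoff_le (Ioc_subset_Icc_self hs) _ _ _

end OneDimensional

/-! ### Rotation fields and radial derivatives -/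

theorem sum_OP {M : Type*} [AddCommMonoid M] (g : Fin 4 → Fin 4 → M) :
    ∑ p : OP, g p.1.1 p.1.2 = g 0 1 + g 0 2 + g 0 3 + g 1 2 + g 1 3 + g 2 3 := by
  rw [← Finset.sum_subtype (F := inferInstance) {p : Fin 4 × Fin 4 | p.1 < p.2} (by simp)
    fun p => g p.1 p.2, Finset.sum_filter, Fintype.sum_prod_type]
  simp [Fin.sum_univ_four, ← add_assoc]

theorem rot_eq_fderiv (j k : Fin 4) (f : Eu 4 → ℝ) (y : Eu 4) :
    rot j k f y = fderiv ℝ f y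
      (y j • EuclideanSpace.single k 1 - y k • EuclideanSpace.single j 1) := by
  simp [rot, sd]

/-- The Plücker coordinates of `ω ∧ v`: the coefficients of the generator of the rotation in the
plane spanned by `ω` and `v` in the basis of the rotation fields. -/
def plucker (ω v : Eu 4) (p : OP) : ℝ :=
  ω p.1.1 * v p.1.2 - ω p.1.2 * v p.1.1

theorem abs_plucker_le (ω v : Eu 4) (p : OP) : |plucker ω v p| ≤ ‖ω‖ * ‖v‖ := by
  have hpair (u : Eu 4) : u p.1.1 ^ 2 + u p.1.2 ^ 2 ≤ ‖u‖ ^ 2 := by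
    rw [EuclideanSpace.real_norm_sq_eq, ← Finset.sum_pair (f := fun i => u i ^ 2) p.2.ne]
    exact Finset.sum_le_sum_of_subset_of_nonneg (Finset.subset_univ _) fun i _ _ => sq_nonneg _
  refine abs_le_of_sq_le_sq ?_ (by positivity)
  calc plucker ω v p ^ 2
      ≤ (ω p.1.1 ^ 2 + ω p.1.2 ^ 2) * (v p.1.1 ^ 2 + v p.1.2 ^ 2) := by
        rw [plucker]
        nlinarith [sq_nonneg (ω p.1.1 * v p.1.1 + ω p.1.2 * v p.1.2)]
    _ ≤ ‖ω‖ ^ 2 * ‖v‖ ^ 2 := by gcongr <;> exact hpair _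
    _ = (‖ω‖ * ‖v‖) ^ 2 := by ring

theorem enorm_sum_plucker_mul_le {ω v : Eu 4} (hω : ‖ω‖ = 1) (hv : ‖v‖ = 1) (a : OP → ℝ) :
    ‖∑ p, plucker ω v p * a p‖ₑ ≤ ∑ p, ‖a p‖ₑ := by
  refine (enorm_sum_le _ _).trans (Finset.sum_le_sum fun p _ => ?_)
  rw [enorm_mul]
  refine mul_le_of_le_one_left' ?_
  rw [Real.enorm_eq_ofReal_abs, ENNReal.ofReal_le_one]
  exact (abs_plucker_le ω v p).trans_eq (by rw [hω, hv, one_mul])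

/-- The derivative of `f` along the infinitesimal rotation taking `ω` to `v`, as a combination of
the fields `Ω_{jk}` with constant coefficients. -/
def rotAlong (ω v : Eu 4) (f : Eu 4 → ℝ) (y : Eu 4) : ℝ :=
  ∑ p : OP, plucker ω v p * rot p.1.1 p.1.2 f y

theorem rotAlong_eq_fderiv (ω v : Eu 4) (f : Eu 4 → ℝ) (y : Eu 4) :
    rotAlong ω v f y = fderiv ℝ f y (inner ℝ ω y • v - inner ℝ v y • ω) := by
  simp only [rotAlong, rot_eq_fderiv, ← smul_eq_mul, ← map_smul, ← map_sum]
  congr 1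
  simp only [plucker]
  rw [sum_OP fun j k => (ω j * v k - ω k * v j) •
    (y j • EuclideanSpace.single k (1 : ℝ) - y k • EuclideanSpace.single j 1)]
  ext i
  fin_cases i <;> simp [PiLp.inner_apply, Fin.sum_univ_four] <;> ring

theorem hasDerivAt_comp_greatCircle {ω v : Eu 4} (hω : ‖ω‖ = 1) (hv : ‖v‖ = 1)
    (hωv : inner ℝ ω v = 0) {f : Eu 4 → ℝ} {r s : ℝ}
    (hf : DifferentiableAt ℝ f (r • greatCircle ω v s)) :
    HasDerivAt (fun s => f (r • greatCircle ω v s)) (rotAlong ω v f (r • greatCircle ω v s)) s := by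
  refine (hf.hasFDerivAt.comp_hasDerivAt s
    ((hasDerivAt_greatCircle ω v s).const_smul r)).congr_deriv ?_
  rw [rotAlong_eq_fderiv, inner_smul_right, inner_smul_right, inner_left_greatCircle hω hωv,
    inner_right_greatCircle hv hωv, mul_smul, mul_smul, ← smul_sub]

theorem hasDerivAt_comp_smul {f : Eu 4 → ℝ} {ω : Eu 4} (hω : ‖ω‖ = 1) {r : ℝ} (hr : 0 < r)
    (hf : DifferentiableAt ℝ f (r • ω)) :
    HasDerivAt (fun r => f (r • ω)) (radialD f (r • ω)) r := by
  refine (hf.hasFDerivAt.comp_hasDerivAt r ((hasDerivAt_id r).smul_const ω)).congr_deriv ?_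
  rw [radialD, norm_smul, hω, mul_one, Real.norm_of_nonneg hr.le, inv_smul_smul₀ hr.ne', one_smul]

theorem contDiffOn_rot {U : Set (Eu 4)} (hU : IsOpen U) {f : Eu 4 → ℝ} {m n : WithTop ℕ∞}
    (hf : ContDiffOn ℝ n f U) (hmn : m + 1 ≤ n) (j k : Fin 4) : ContDiffOn ℝ m (rot j k f) U := by
  have hsd (i : Fin 4) : ContDiffOn ℝ m (sd i f) U :=
    (hf.fderiv_of_isOpen hU hmn).clm_apply contDiffOn_const
  have hcoord (i : Fin 4) : ContDiffOn ℝ m (fun y : Eu 4 => y i) U :=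
    (EuclideanSpace.proj (𝕜 := ℝ) i).contDiff.contDiffOn
  exact ((hcoord j).mul (hsd k)).sub ((hcoord k).mul (hsd j))

theorem contDiffOn_radialD {f : Eu 4 → ℝ} {m n : WithTop ℕ∞} (hf : ContDiffOn ℝ n f {0}ᶜ)
    (hmn : m + 1 ≤ n) : ContDiffOn ℝ m (radialD f) {0}ᶜ := by
  have hinv : ContDiffOn ℝ m (fun y : Eu 4 => ‖y‖⁻¹) {0}ᶜ := fun y hy =>
    ((contDiffAt_norm ℝ hy).inv (norm_ne_zero_iff.2 hy)).contDiffWithinAt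
  exact (hf.fderiv_of_isOpen isOpen_compl_singleton hmn).clm_apply (hinv.smul contDiffOn_id)

theorem measurable_rot (j k : Fin 4) (f : Eu 4 → ℝ) : Measurable (rot j k f) := by
  have hsd (i : Fin 4) : Measurable (sd i f) := measurable_fderiv_apply_const ℝ f _
  unfold rot
  fun_prop

theorem measurable_rotIter {m : ℕ} (μ : Fin m → OP) {f : Eu 4 → ℝ} (hf : Measurable f) :
    Measurable (rotIter μ f) := by
  cases m with
  | zero => exact hf
  | succ m => exact measurable_rot _ _ _

theorem measurable_radialD (f : Eu 4 → ℝ) : Measurable (radialD f) :=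
  isBoundedBilinearMap_apply.continuous.measurable.comp
    ((measurable_fderiv ℝ f).prodMk (by fun_prop : Measurable fun y : Eu 4 => ‖y‖⁻¹ • y))


theorem measurable_radialIter (j : ℕ) {f : Eu 4 → ℝ} (hf : Measurable f) :
    Measurable (radialIter j f) := by
  cases j with
  | zero => exact hf
  | succ j => exact measurable_radialD _

/-! ### Pointwise bounds along a sector -/

/-- The sum `∑_{|μ| ≤ 2} |Ω^μ f|`, valued in `ℝ≥0∞` so that it can be integrated without regard to
integrability. -/
def angularSum (f : Eu 4 → ℝ) (y : Eu 4) : ℝ≥0∞ :=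
  ∑ m ∈ Finset.range 3, ∑ μ : Fin m → OP, ‖rotIter μ f y‖ₑ

theorem angularSum_eq (f : Eu 4 → ℝ) (y : Eu 4) :
    angularSum f y = ‖f y‖ₑ + ∑ p : OP, ‖rot p.1.1 p.1.2 f y‖ₑ +
      ∑ p : OP, ∑ q : OP, ‖rot p.1.1 p.1.2 (rot q.1.1 q.1.2 f) y‖ₑ := by
  have h₁ : ∑ μ : Fin 1 → OP, ‖rotIter μ f y‖ₑ = ∑ p : OP, ‖rot p.1.1 p.1.2 f y‖ₑ :=
    Fintype.sum_equiv (Equiv.funUnique (Fin 1) OP) _ _ fun _ => rfl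
  have h₂ : ∑ μ : Fin 2 → OP, ‖rotIter μ f y‖ₑ =
      ∑ p : OP, ∑ q : OP, ‖rot p.1.1 p.1.2 (rot q.1.1 q.1.2 f) y‖ₑ := by
    rw [← Fintype.sum_prod_type']
    exact Fintype.sum_equiv (finTwoArrowEquiv OP) _ _ fun _ => rfl
  rw [angularSum, Finset.sum_range_succ, Finset.sum_range_succ, Finset.sum_range_one, h₁, h₂]
  simp [rotIter]

theorem measurable_angularSum {f : Eu 4 → ℝ} (hf : Measurable f) : Measurable (angularSum f) :=
  Finset.measurable_fun_sum _ fun _ _ => Finset.measurable_fun_sum _ fun μ _ =>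
    (measurable_rotIter μ hf).enorm

theorem enorm_le_lintegral_angularSum {f : Eu 4 → ℝ} (hf : ContDiffOn ℝ 2 f {0}ᶜ) {ω v : Eu 4}
    (hω : ‖ω‖ = 1) (hv : ‖v‖ = 1) (hωv : inner ℝ ω v = 0) {r : ℝ} (hr : 0 < r) :
    ‖f (r • ω)‖ₑ ≤ ∫⁻ s in Ioc (0 : ℝ) 1,
      ENNReal.ofReal (4 * s) * angularSum f (r • greatCircle ω v s) := by
  have hne (s : ℝ) : r • greatCircle ω v s ∈ ({0}ᶜ : Set (Eu 4)) :=
    norm_pos_iff.1 (by rwa [norm_smul_greatCircle hω hv hωv hr.le])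
  have hderiv {g : Eu 4 → ℝ} (hg : ContDiffOn ℝ 1 g {0}ᶜ) (s : ℝ) :
      HasDerivAt (fun s => g (r • greatCircle ω v s))
        (rotAlong ω v g (r • greatCircle ω v s)) s :=
    hasDerivAt_comp_greatCircle hω hv hωv
      ((hg.differentiableOn one_ne_zero).differentiableAt
        (isOpen_compl_singleton.mem_nhds (hne s)))
  have hrot (p : OP) : ContDiffOn ℝ 1 (rot p.1.1 p.1.2 f) {0}ᶜ :=
    contDiffOn_rot isOpen_compl_singleton hf one_add_one_eq_two.le _ _
  have hcont (p q : OP) :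
      Continuous fun s => rot q.1.1 q.1.2 (rot p.1.1 p.1.2 f) (r • greatCircle ω v s) :=
    (contDiffOn_rot (m := 0) isOpen_compl_singleton (hrot p) (zero_add 1).le _ _).continuousOn
      |>.comp_continuous (by fun_prop) hne
  calc ‖f (r • ω)‖ₑ
      ≤ ∫⁻ s in Ioc (0 : ℝ) 1, ENNReal.ofReal (4 * s) * (‖f (r • greatCircle ω v s)‖ₑ +
          ‖rotAlong ω v f (r • greatCircle ω v s)‖ₑ +
          ‖∑ p : OP, plucker ω v p *
            rotAlong ω v (rot p.1.1 p.1.2 f) (r • greatCircle ω v s)‖ₑ) := by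
        have h := enorm_le_lintegral_enorm_deriv_deriv
          (fun s _ => hderiv (hf.of_le one_le_two) s)
          (fun s _ => HasDerivAt.fun_sum fun p _ => (hderiv (hrot p) s).const_mul (plucker ω v p))
          (continuous_finsetSum _ fun p _ => continuous_const.mul
            (continuous_finsetSum _ fun q _ => continuous_const.mul (hcont p q))).continuousOn
        rwa [greatCircle_zero] at h
    _ ≤ _ := by
        refine lintegral_mono fun s => ?_
        rw [angularSum_eq, Finset.sum_comm]
        gcongr
        · exact enorm_sum_plucker_mul_le hω hv _
        · exact (enorm_sum_plucker_mul_le hω hv _).trans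
            (Finset.sum_le_sum fun p _ => enorm_sum_plucker_mul_le hω hv _)

/-- The sum `∑_{j ≤ 1, |μ| ≤ 2} ℓ^j |Ω^μ ∇_r^j h|`, in which the length `ℓ` makes the radial
derivative comparable in scale with `h`. -/
def sobolevSum (ℓ : ℝ) (h : Eu 4 → ℝ) (y : Eu 4) : ℝ≥0∞ :=
  ∑ j ∈ Finset.range 2, ENNReal.ofReal (ℓ ^ j) * angularSum (radialIter j h) y

theorem sobolevSum_eq (ℓ : ℝ) (h : Eu 4 → ℝ) (y : Eu 4) :
    sobolevSum ℓ h y = angularSum h y + ENNReal.ofReal ℓ * angularSum (radialD h) y := by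
  simp [sobolevSum, Finset.sum_range_succ, radialIter]

theorem measurable_sobolevSum (ℓ : ℝ) {h : Eu 4 → ℝ} (hh : Measurable h) :
    Measurable (sobolevSum ℓ h) :=
  Finset.measurable_fun_sum _ fun j _ =>
    (measurable_angularSum (measurable_radialIter j hh)).const_mul _

theorem enorm_add_enorm_radialD_le_lintegral {h : Eu 4 → ℝ} (hh : ContDiffOn ℝ 3 h {0}ᶜ)
    {ω v : Eu 4} (hω : ‖ω‖ = 1) (hv : ‖v‖ = 1) (hωv : inner ℝ ω v = 0) {r : ℝ} (hr : 0 < r)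
    (ℓ : ℝ) :
    ‖h (r • ω)‖ₑ + ENNReal.ofReal ℓ * ‖radialD h (r • ω)‖ₑ ≤ ∫⁻ s in Ioc (0 : ℝ) 1,
      ENNReal.ofReal (4 * s) * sobolevSum ℓ h (r • greatCircle ω v s) := by
  have hmeas : Measurable (angularSum h) :=
    measurable_angularSum (measurable_of_continuousOn_compl_singleton 0 hh.continuousOn)
  calc ‖h (r • ω)‖ₑ + ENNReal.ofReal ℓ * ‖radialD h (r • ω)‖ₑ
      ≤ (∫⁻ s in Ioc (0 : ℝ) 1, ENNReal.ofReal (4 * s) *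
            angularSum h (r • greatCircle ω v s)) +
          ENNReal.ofReal ℓ * ∫⁻ s in Ioc (0 : ℝ) 1, ENNReal.ofReal (4 * s) *
            angularSum (radialD h) (r • greatCircle ω v s) := by
        gcongr
        · exact enorm_le_lintegral_angularSum (hh.of_le (by norm_num)) hω hv hωv hr
        · exact enorm_le_lintegral_angularSum
            (contDiffOn_radialD hh two_add_one_eq_three.le) hω hv hωv hr
    _ = _ := by
        rw [← lintegral_const_mul' _ _ ENNReal.ofReal_ne_top, ← lintegral_add_left (by fun_prop)]
        simp only [sobolevSum_eq, mul_add, mul_left_comm]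

theorem ofReal_mul_enorm_le_setLIntegral_sobolevSum {h : Eu 4 → ℝ} (hh : ContDiffOn ℝ 3 h {0}ᶜ)
    {ω v : Eu 4} (hω : ‖ω‖ = 1) (hv : ‖v‖ = 1) (hωv : inner ℝ ω v = 0) {r ℓ : ℝ} (hr : 0 < r)
    (hℓ : 0 ≤ ℓ) :
    ENNReal.ofReal ℓ * ‖h (r • ω)‖ₑ ≤ ∫⁻ p in Ioc r (r + ℓ) ×ˢ Ioc (0 : ℝ) 1,
      ENNReal.ofReal (4 * p.2) * sobolevSum ℓ h (p.1 • greatCircle ω v p.2) := by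
  have hne (ρ : ℝ) (hρ : ρ ∈ Icc r (r + ℓ)) : ρ • ω ∈ ({0}ᶜ : Set (Eu 4)) :=
    smul_ne_zero (hr.trans_le hρ.1).ne' (norm_ne_zero_iff.1 (hω.trans_ne one_ne_zero))
  have hmeas : Measurable (sobolevSum ℓ h) :=
    measurable_sobolevSum ℓ (measurable_of_continuousOn_compl_singleton 0 hh.continuousOn)
  calc ENNReal.ofReal ℓ * ‖h (r • ω)‖ₑ
      ≤ ∫⁻ ρ in Ioc r (r + ℓ), (‖h (ρ • ω)‖ₑ + ENNReal.ofReal ℓ * ‖radialD h (ρ • ω)‖ₑ) :=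
        ofReal_mul_enorm_le_lintegral hℓ
          (fun ρ hρ => hasDerivAt_comp_smul hω (hr.trans_le hρ.1)
            ((hh.differentiableOn three_ne_zero).differentiableAt
              (isOpen_compl_singleton.mem_nhds (hne ρ hρ))))
          ((contDiffOn_radialD hh two_add_one_eq_three.le).continuousOn.comp (by fun_prop) hne)
    _ ≤ ∫⁻ ρ in Ioc r (r + ℓ), ∫⁻ s in Ioc (0 : ℝ) 1,
          ENNReal.ofReal (4 * s) * sobolevSum ℓ h (ρ • greatCircle ω v s) :=
        setLIntegral_mono' measurableSet_Ioc fun ρ hρ =>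
          enorm_add_enorm_radialD_le_lintegral hh hω hv hωv (hr.trans hρ.1) ℓ
    _ = _ := by
        rw [Measure.volume_eq_prod, setLIntegral_prod _ (by fun_prop)]

/-! ### Integration over the sphere of directions -/

theorem sq_lintegral_le {α : Type*} [MeasurableSpace α] {μ : Measure α} {f : α → ℝ≥0∞}
    (hf : AEMeasurable f μ) : (∫⁻ a, f a ∂μ) ^ 2 ≤ μ univ * ∫⁻ a, f a ^ 2 ∂μ := by
  have h := ENNReal.lintegral_mul_le_Lp_mul_Lq μ .two_two hf (aemeasurable_const (b := 1))
  simp only [Pi.mul_apply, mul_one, ENNReal.rpow_two, one_pow, lintegral_one] at h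
  calc (∫⁻ a, f a ∂μ) ^ 2
      ≤ ((∫⁻ a, f a ^ 2 ∂μ) ^ (1 / 2 : ℝ) * μ univ ^ (1 / 2 : ℝ)) ^ 2 := by gcongr
    _ = μ univ * ∫⁻ a, f a ^ 2 ∂μ := by
        rw [mul_pow, ← ENNReal.rpow_mul_natCast, ← ENNReal.rpow_mul_natCast, mul_comm]
        norm_num

theorem sq_le_four_mul_sin_sq {s : ℝ} (hs : s ∈ Icc (0 : ℝ) 1) : s ^ 2 ≤ 4 * sin s ^ 2 := by
  have hpi : 1 / 2 ≤ 2 / π := by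
    rw [div_le_div_iff₀ two_pos pi_pos]
    linarith [pi_lt_four]
  have hsin : s ≤ 2 * sin s := by
    linarith [mul_le_sin hs.1 (by linarith [hs.2, pi_gt_three]),
      mul_le_mul_of_nonneg_right hpi hs.1]
  calc s ^ 2 ≤ (2 * sin s) ^ 2 := by gcongr; exact hs.1
    _ = 4 * sin s ^ 2 := by ring

theorem pow_mul_sq_le_mul_sin_sq {r ρ s : ℝ} (hr : 0 ≤ r) (hρ : r ≤ ρ) (hs : s ∈ Icc (0 : ℝ) 1) :
    r ^ 3 * (4 * s) ^ 2 ≤ 64 * (ρ ^ 3 * sin s ^ 2) :=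
  calc r ^ 3 * (4 * s) ^ 2 = 16 * (r ^ 3 * s ^ 2) := by ring
    _ ≤ 16 * (ρ ^ 3 * (4 * sin s ^ 2)) := by
      gcongr
      · exact pow_nonneg (hr.trans hρ) 3
      · exact sq_le_four_mul_sin_sq hs
    _ = 64 * (ρ ^ 3 * sin s ^ 2) := by ring

theorem ofReal_mul_enorm_sq_le_setLIntegral_sector {h : Eu 4 → ℝ} (hh : ContDiffOn ℝ 3 h {0}ᶜ)
    {ω v : Eu 4} (hω : ‖ω‖ = 1) (hv : ‖v‖ = 1) (hωv : inner ℝ ω v = 0) {r ℓ : ℝ} (hr : 0 < r)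
    (hℓ : 0 < ℓ) :
    ENNReal.ofReal (r ^ 3 * ℓ) * ‖h (r • ω)‖ₑ ^ 2 ≤
      64 * ∫⁻ p in Ioc r (r + ℓ) ×ˢ Ioc (0 : ℝ) 1, ENNReal.ofReal (p.1 ^ 3 * sin p.2 ^ 2) *
        sobolevSum ℓ h (p.1 • greatCircle ω v p.2) ^ 2 := by
  have hmeas : Measurable (sobolevSum ℓ h) :=
    measurable_sobolevSum ℓ (measurable_of_continuousOn_compl_singleton 0 hh.continuousOn)
  set Q : Set (ℝ × ℝ) := Ioc r (r + ℓ) ×ˢ Ioc (0 : ℝ) 1 with hQ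
  have hQvol : volume Q = ENNReal.ofReal ℓ := by
    simp [hQ, Measure.volume_eq_prod]
  rw [← ENNReal.mul_le_mul_iff_right (ENNReal.ofReal_pos.2 hℓ).ne' ENNReal.ofReal_ne_top]
  calc ENNReal.ofReal ℓ * (ENNReal.ofReal (r ^ 3 * ℓ) * ‖h (r • ω)‖ₑ ^ 2)
      = ENNReal.ofReal (r ^ 3) * (ENNReal.ofReal ℓ * ‖h (r • ω)‖ₑ) ^ 2 := by
        rw [ENNReal.ofReal_mul (by positivity)]
        ring
    _ ≤ ENNReal.ofReal (r ^ 3) * (ENNReal.ofReal ℓ * ∫⁻ p in Q,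
          (ENNReal.ofReal (4 * p.2) * sobolevSum ℓ h (p.1 • greatCircle ω v p.2)) ^ 2) := by
        gcongr
        refine (pow_le_pow_left' (ofReal_mul_enorm_le_setLIntegral_sobolevSum hh hω hv hωv hr
          hℓ.le) 2).trans ((sq_lintegral_le (by fun_prop)).trans_eq ?_)
        rw [Measure.restrict_apply_univ, hQvol]
    _ = ENNReal.ofReal ℓ * ∫⁻ p in Q, ENNReal.ofReal (r ^ 3) *
          (ENNReal.ofReal (4 * p.2) * sobolevSum ℓ h (p.1 • greatCircle ω v p.2)) ^ 2 := by
        rw [lintegral_const_mul' _ _ ENNReal.ofReal_ne_top, mul_left_comm]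
    _ ≤ ENNReal.ofReal ℓ * ∫⁻ p in Q, 64 * (ENNReal.ofReal (p.1 ^ 3 * sin p.2 ^ 2) *
          sobolevSum ℓ h (p.1 • greatCircle ω v p.2) ^ 2) := by
        gcongr ENNReal.ofReal ℓ * ?_
        refine setLIntegral_mono' (measurableSet_Ioc.prod measurableSet_Ioc) fun p hp => ?_
        rw [mul_pow, ← mul_assoc, ← mul_assoc, ← ENNReal.ofReal_pow (by linarith [hp.2.1]),
          ← ENNReal.ofReal_mul (by positivity), ← ENNReal.ofReal_ofNat 64,
          ← ENNReal.ofReal_mul (by positivity)]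
        gcongr ENNReal.ofReal ?_ * _
        exact pow_mul_sq_le_mul_sin_sq hr.le hp.1.1.le (Ioc_subset_Icc_self hp.2)
    _ = _ := by rw [lintegral_const_mul' _ _ (by finiteness)]

theorem ofReal_mul_enorm_sq_le_lintegral_indicator {h : Eu 4 → ℝ} (hh : ContDiffOn ℝ 3 h {0}ᶜ)
    {ω v : Eu 4} (hω : ‖ω‖ = 1) (hv : ‖v‖ = 1) (hωv : inner ℝ ω v = 0) {r ℓ : ℝ} (hr : 0 < r)
    (hℓ : 0 < ℓ) :
    ENNReal.ofReal (r ^ 3 * ℓ) * ‖h (r • ω)‖ₑ ^ 2 ≤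
      64 * ∫⁻ p in Ioi (0 : ℝ) ×ˢ Ioo 0 π, ENNReal.ofReal (p.1 ^ 3 * sin p.2 ^ 2) *
        (norm ⁻¹' Icc r (r + ℓ)).indicator (fun y => sobolevSum ℓ h y ^ 2)
          (p.1 • greatCircle ω v p.2) := by
  have hsub : Ioc r (r + ℓ) ×ˢ Ioc (0 : ℝ) 1 ⊆ Ioi 0 ×ˢ Ioo 0 π :=
    prod_mono (fun _ hρ => hr.trans hρ.1) fun _ hs => ⟨hs.1, by linarith [hs.2, pi_gt_three]⟩
  refine (ofReal_mul_enorm_sq_le_setLIntegral_sector hh hω hv hωv hr hℓ).trans ?_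
  gcongr 64 * ?_
  refine (setLIntegral_mono' (measurableSet_Ioc.prod measurableSet_Ioc) fun p hp => ?_).trans
    (lintegral_mono_set hsub)
  have hmem : p.1 • greatCircle ω v p.2 ∈ norm ⁻¹' Icc r (r + ℓ) := by
    rw [mem_preimage, norm_smul_greatCircle hω hv hωv (hr.trans hp.1.1).le]
    exact Ioc_subset_Icc_self hp.1
  rw [indicator_of_mem hmem]

theorem ofReal_mul_enorm_sq_le_setLIntegral_shell {h : Eu 4 → ℝ} (hh : ContDiffOn ℝ 3 h {0}ᶜ)
    {x : Eu 4} (hx : x ≠ 0) {ℓ : ℝ} (hℓ : 0 < ℓ) :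
    ENNReal.ofReal (4 * π) * (ENNReal.ofReal (‖x‖ ^ 3 * ℓ) * ‖h x‖ₑ ^ 2) ≤
      64 * ∫⁻ y in norm ⁻¹' Icc ‖x‖ (‖x‖ + ℓ), sobolevSum ℓ h y ^ 2 := by
  have hmeas : Measurable (sobolevSum ℓ h) :=
    measurable_sobolevSum ℓ (measurable_of_continuousOn_compl_singleton 0 hh.continuousOn)
  have hr : 0 < ‖x‖ := norm_pos_iff.2 hx
  obtain ⟨ω, hω, hrω⟩ : ∃ ω : Eu 4, ‖ω‖ = 1 ∧ ‖x‖ • ω = x :=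
    ⟨‖x‖⁻¹ • x, norm_smul_inv_norm (𝕜 := ℝ) hx, smul_inv_smul₀ hr.ne' x⟩
  obtain ⟨J, hJ⟩ := exists_linearIsometry_orthogonal (n := 3) finrank_euclideanSpace_fin
    (norm_ne_zero_iff.1 (hω.trans_ne one_ne_zero))
  have hS : MeasurableSet (norm ⁻¹' Icc ‖x‖ (‖x‖ + ℓ) : Set (Eu 4)) :=
    measurableSet_Icc.preimage measurable_norm
  calc ENNReal.ofReal (4 * π) * (ENNReal.ofReal (‖x‖ ^ 3 * ℓ) * ‖h x‖ₑ ^ 2)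
      = ∫⁻ _ : Metric.sphere (0 : Eu 3) 1, ENNReal.ofReal (‖x‖ ^ 3 * ℓ) * ‖h (‖x‖ • ω)‖ₑ ^ 2
          ∂(volume : Measure (Eu 3)).toSphere := by
        rw [lintegral_const, toSphere_volume_univ_Eu_three, mul_comm, hrω]
    _ ≤ _ := lintegral_mono fun v => ofReal_mul_enorm_sq_le_lintegral_indicator hh hω
        ((J.norm_map v).trans (norm_eq_of_mem_sphere v)) (hJ v) hr hℓ
    _ = 64 * ∫⁻ y, (norm ⁻¹' Icc ‖x‖ (‖x‖ + ℓ)).indicator (fun y => sobolevSum ℓ h y ^ 2) y := by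
        rw [lintegral_const_mul' _ _ (by finiteness), lintegral_eq_lintegral_greatCircle (n := 2)
          finrank_euclideanSpace_fin finrank_euclideanSpace_fin hω hJ
          ((hmeas.pow_const 2).indicator hS)]
    _ = _ := by rw [lintegral_indicator hS]

theorem enorm_le_mul_eLpNorm_sobolevSum {h : Eu 4 → ℝ} (hh : ContDiffOn ℝ 3 h {0}ᶜ)
    {x : Eu 4} (hx : x ≠ 0) {ℓ : ℝ} (hℓ : 0 < ℓ) :
    ‖h x‖ₑ ≤ ENNReal.ofReal (4 / √(π * (‖x‖ ^ 3 * ℓ))) *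
      eLpNorm (sobolevSum ℓ h) 2 (volume.restrict (norm ⁻¹' Icc ‖x‖ (‖x‖ + ℓ))) := by
  have hc : 0 < 4 * π * (‖x‖ ^ 3 * ℓ) := by
    have := norm_pos_iff.2 hx
    positivity
  have hsq : eLpNorm (sobolevSum ℓ h) 2 (volume.restrict (norm ⁻¹' Icc ‖x‖ (‖x‖ + ℓ))) ^ 2 =
      ∫⁻ y in norm ⁻¹' Icc ‖x‖ (‖x‖ + ℓ), sobolevSum ℓ h y ^ 2 := by
    simpa using eLpNorm_nnreal_pow_eq_lintegral (f := sobolevSum ℓ h)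
      (μ := volume.restrict (norm ⁻¹' Icc ‖x‖ (‖x‖ + ℓ))) two_ne_zero
  have hconst : ENNReal.ofReal (4 * π * (‖x‖ ^ 3 * ℓ)) *
      ENNReal.ofReal (4 / √(π * (‖x‖ ^ 3 * ℓ))) ^ 2 = 64 := by
    rw [← ENNReal.ofReal_pow (by positivity), ← ENNReal.ofReal_mul hc.le, div_pow,
      Real.sq_sqrt (by linarith), ← ENNReal.ofReal_ofNat 64]
    congr 1
    field_simp
    norm_num
  rw [← (ENNReal.pow_right_strictMono two_ne_zero).le_iff_le, mul_pow,
    ← ENNReal.mul_le_mul_iff_right (ENNReal.ofReal_pos.2 hc).ne' ENNReal.ofReal_ne_top,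
    ← mul_assoc (ENNReal.ofReal _), hconst, hsq, ENNReal.ofReal_mul (by positivity), mul_assoc]
  exact ofReal_mul_enorm_sq_le_setLIntegral_shell hh hx hℓ

theorem eLpNorm_ofReal_mul_le {α : Type*} [MeasurableSpace α] {μ : Measure α} (c : ℝ)
    (f : α → ℝ≥0∞) (p : ℝ≥0∞) :
    eLpNorm (fun a => ENNReal.ofReal c * f a) p μ ≤ ENNReal.ofReal c * eLpNorm f p μ :=
  eLpNorm_le_nnreal_smul_eLpNorm_of_ae_le_mul' (c := c.toNNReal) (g := f)
    (.of_forall fun _ => (enorm_eq_self _).trans_le (by rw [enorm_eq_self, ENNReal.ofReal])) p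

theorem eLpNorm_angularSum_le (A : Set (Eu 4)) {f : Eu 4 → ℝ} (hf : Measurable f) :
    eLpNorm (angularSum f) 2 (volume.restrict A) ≤
      ∑ m ∈ Finset.range 3, ∑ μ : Fin m → OP, L2x A (rotIter μ f) := by
  have hmeas {m : ℕ} (μ : Fin m → OP) :
      AEStronglyMeasurable (fun y => ‖rotIter μ f y‖ₑ) (volume.restrict A) :=
    (measurable_rotIter μ hf).enorm.aestronglyMeasurable
  have hsum : angularSum f = ∑ m ∈ Finset.range 3, ∑ μ : Fin m → OP, fun y => ‖rotIter μ f y‖ₑ := by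
    funext y
    simp only [angularSum, Finset.sum_apply]
  rw [hsum]
  refine (eLpNorm_sum_le (fun m _ => Finset.aestronglyMeasurable_sum _ fun μ _ => hmeas μ)
    one_le_two).trans (Finset.sum_le_sum fun m _ => ?_)
  refine (eLpNorm_sum_le (fun μ _ => hmeas μ) one_le_two).trans
    (Finset.sum_le_sum fun μ _ => (eLpNorm_enorm _).le)

theorem eLpNorm_sobolevSum_le (A : Set (Eu 4)) {h : Eu 4 → ℝ} (hh : Measurable h) (ℓ : ℝ) :
    eLpNorm (sobolevSum ℓ h) 2 (volume.restrict A) ≤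
      ∑ m ∈ Finset.range 3, ∑ μ : Fin m → OP, ∑ j ∈ Finset.range 2,
        ENNReal.ofReal (ℓ ^ j) * L2x A (rotIter μ (radialIter j h)) := by
  have hsum : sobolevSum ℓ h = ∑ j ∈ Finset.range 2, fun y =>
      ENNReal.ofReal (ℓ ^ j) * angularSum (radialIter j h) y := by
    funext y
    simp only [sobolevSum, Finset.sum_apply]
  have hmeas (j : ℕ) : Measurable (angularSum (radialIter j h)) :=
    measurable_angularSum (measurable_radialIter j hh)
  calc eLpNorm (sobolevSum ℓ h) 2 (volume.restrict A)
      ≤ ∑ j ∈ Finset.range 2, eLpNorm (fun y => ENNReal.ofReal (ℓ ^ j) *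
          angularSum (radialIter j h) y) 2 (volume.restrict A) := by
        rw [hsum]
        exact eLpNorm_sum_le (fun j _ => ((hmeas j).const_mul _).aestronglyMeasurable) one_le_two
    _ ≤ ∑ j ∈ Finset.range 2, ENNReal.ofReal (ℓ ^ j) *
          ∑ m ∈ Finset.range 3, ∑ μ : Fin m → OP, L2x A (rotIter μ (radialIter j h)) := by
        refine Finset.sum_le_sum fun j _ => (eLpNorm_ofReal_mul_le _ _ 2).trans ?_
        gcongr
        exact eLpNorm_angularSum_le A (measurable_radialIter j hh)
    _ = _ := by
        simp only [Finset.mul_sum]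
        rw [Finset.sum_comm]
        exact Finset.sum_congr rfl fun m _ => Finset.sum_comm

theorem four_div_sqrt_le {R r ℓ : ℝ} (hR : 0 < R) (hr : R ≤ r) (hℓ : 0 < ℓ) :
    4 / √(π * (r ^ 3 * ℓ)) ≤ 4 / √π * (ℓ ^ (-(1 : ℝ) / 2) * R ^ (-(3 : ℝ) / 2)) :=
  calc 4 / √(π * (r ^ 3 * ℓ)) ≤ 4 / √(π * (R ^ 3 * ℓ)) := by gcongr
    _ = 4 / √π * (ℓ ^ (-(1 : ℝ) / 2) * R ^ (-(3 : ℝ) / 2)) := by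
      have hR3 : √(R ^ 3) = R ^ ((3 : ℝ) / 2) := by
        rw [Real.sqrt_eq_rpow, ← Real.rpow_natCast_mul hR.le]
        norm_num
      rw [Real.sqrt_mul pi_pos.le, Real.sqrt_mul (by positivity), hR3, Real.sqrt_eq_rpow ℓ,
        neg_div, neg_div, Real.rpow_neg hℓ.le, Real.rpow_neg hR.le]
      field_simp

theorem weighted_sobolev_annulus_general :
    ∃ C : ℝ, 0 < C ∧ ∀ h : Eu 4 → ℝ, ContDiffOn ℝ 3 h {0}ᶜ → ∀ R ℓ : ℝ, 0 < R → 0 < ℓ →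
      ℓ ≤ 2 * R → ∀ x : Eu 4, R ≤ ‖x‖ → ‖x‖ ≤ 2 * R →
        ENNReal.ofReal |h x| ≤ ENNReal.ofReal (C * (ℓ ^ (-(1 : ℝ) / 2) * R ^ (-(3 : ℝ) / 2))) *
          ∑ m ∈ Finset.range 3, ∑ μ : Fin m → OP, ∑ j ∈ Finset.range 2, ENNReal.ofReal (ℓ ^ j) *
            L2x {y : Eu 4 | R / 2 ≤ ‖y‖ ∧ ‖y‖ ≤ 4 * R} (rotIter μ (radialIter j h)) := by
  refine ⟨4 / √π, by positivity, fun h hh R ℓ hR hℓ hℓR x hRx hxR => ?_⟩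
  set A : Set (Eu 4) := {y | R / 2 ≤ ‖y‖ ∧ ‖y‖ ≤ 4 * R}
  have hsub : norm ⁻¹' Icc ‖x‖ (‖x‖ + ℓ) ⊆ A := fun y hy =>
    ⟨by linarith [hy.1], by linarith [hy.2]⟩
  have hx : x ≠ 0 := norm_pos_iff.1 (hR.trans_le hRx)
  calc ENNReal.ofReal |h x| = ‖h x‖ₑ := (Real.enorm_eq_ofReal_abs _).symm
    _ ≤ ENNReal.ofReal (4 / √(π * (‖x‖ ^ 3 * ℓ))) *
          eLpNorm (sobolevSum ℓ h) 2 (volume.restrict (norm ⁻¹' Icc ‖x‖ (‖x‖ + ℓ))) :=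
        enorm_le_mul_eLpNorm_sobolevSum hh hx hℓ
    _ ≤ ENNReal.ofReal (4 / √π * (ℓ ^ (-(1 : ℝ) / 2) * R ^ (-(3 : ℝ) / 2))) *
          eLpNorm (sobolevSum ℓ h) 2 (volume.restrict A) := by
        gcongr
        exact four_div_sqrt_le hR hRx hℓ
    _ ≤ _ := by
        gcongr
        exact eLpNorm_sobolevSum_le A
          (measurable_of_continuousOn_compl_singleton 0 hh.continuousOn) ℓ

/-- Weighted Sobolev estimate on dyadic annuli in ℝ⁴. -/
theorem weighted_sobolev_annulus :
    ∃ C : ℝ, 0 < C ∧ ∀ h : Eu 4 → ℝ, ContDiff ℝ (⊤ : ℕ∞) h → ∀ R : ℝ, 1 < R →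
      ∀ x : Eu 4, R ≤ ‖x‖ → ‖x‖ ≤ 2 * R →
        ENNReal.ofReal |h x|
          ≤ ENNReal.ofReal (C * R ^ (-(3 : ℝ)/2)) *
            ∑ m ∈ Finset.range 3, ∑ μ : Fin m → OP, ∑ j ∈ Finset.range 2,
              L2x {y : Eu 4 | R/2 ≤ ‖y‖ ∧ ‖y‖ ≤ 4 * R}
                (rotIter μ (radialIter j h)) := by
  obtain ⟨C, hC, hbound⟩ := weighted_sobolev_annulus_general
  exact ⟨C, hC, fun h hh R hR x hRx hxR => by
    simpa using hbound h (hh.contDiffOn.of_le (by norm_cast)) R 1 (by linarith) one_pos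
      (by linarith) x hRx hxR⟩
end
end
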